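/- arXiv:2206.10217 — 2 statements merged into one kernel-verified Lean document; each statement's English description precedes it below -/
import Mathlib

section
/- Suppose z > 0 is the unique solution of 1/ξ'(1) = ((1+z)/z²) log(1+z) − 1/z, that ξ'(1) > ξ''(0)(1+z), and that s ↦ s/ξ'(s) is convex on (0,1). Then the minimizer γ⋆ over 𝒰 of the zero-temperature spherical Parisi functional P is one-step replica symmetry breaking: there exist constants c₀, c₁ ≥ 0 and t₀ ∈ [0,1) such that γ⋆(t) = c₀ + c₁ · 1{t ≥ t₀} for almost every t ∈ [0,1). -/
open MeasureTheory ProbabilityTheory Filter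
open scoped ENNReal NNReal

noncomputable section

/-- Euclidean dot product on `ℝ^N`. -/
def dotp {N : ℕ} (σ τ : Fin N → ℝ) : ℝ := ∑ i, σ i * τ i

/-- The sphere `S_N = {σ : ‖σ‖₂² = N}`. -/
def sphereSet (N : ℕ) : Set (Fin N → ℝ) := {σ | ∑ i, (σ i) ^ 2 = (N : ℝ)}

/-- The mixture `ξ(x) = Σ_{k=2}^P c_k² x^k`. -/
def xiFun (P : ℕ) (c : ℕ → ℝ) (x : ℝ) : ℝ := ∑ k ∈ Finset.Icc 2 P, (c k) ^ 2 * x ^ k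

/-- `ξ'`. -/
def xiD1 (P : ℕ) (c : ℕ → ℝ) (x : ℝ) : ℝ :=
  ∑ k ∈ Finset.Icc 2 P, (k : ℝ) * (c k) ^ 2 * x ^ (k - 1)

/-- `ξ''`. -/
def xiD2 (P : ℕ) (c : ℕ → ℝ) (x : ℝ) : ℝ :=
  ∑ k ∈ Finset.Icc 2 P, (k : ℝ) * ((k : ℝ) - 1) * (c k) ^ 2 * x ^ (k - 2)

/-- The mixed p-spin Hamiltonian built from couplings `g`. -/
def hamiltonian (N P : ℕ) (c : ℕ → ℝ) (g : (k : ℕ) → (Fin k → Fin N) → ℝ)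
    (σ : Fin N → ℝ) : ℝ :=
  ∑ k ∈ Finset.Icc 2 P, c k * (N : ℝ) ^ (-(((k : ℝ) - 1) / 2)) *
    ∑ j : Fin k → Fin N, g k j * ∏ i, σ (j i)

/-- Index set for the entries of all the coupling tensors. -/
abbrev GIdx (N P : ℕ) : Type := Σ k : {k : ℕ // k ∈ Finset.Icc 2 P}, (Fin (k : ℕ) → Fin N)

/-- Flatten the couplings into a single Gaussian vector. -/
def flatten (N P : ℕ) (g : (k : ℕ) → (Fin k → Fin N) → ℝ) : GIdx N P → ℝ :=
  fun i => g i.1 i.2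

/-- The couplings `(G^{(k)})_{2 ≤ k ≤ P}` are i.i.d. standard Gaussians. -/
def StdGaussianCouplings {Ω : Type*} [MeasureSpace Ω] (N P : ℕ)
    (G : Ω → (k : ℕ) → (Fin k → Fin N) → ℝ) : Prop :=
  Measure.map (fun ω => flatten N P (G ω)) ℙ = Measure.pi fun _ : GIdx N P => gaussianReal 0 1

/-- The maximum of the Hamiltonian over the sphere. -/
def maxH (N P : ℕ) (c : ℕ → ℝ) (g : (k : ℕ) → (Fin k → Fin N) → ℝ) : ℝ :=
  ⨆ σ : sphereSet N, hamiltonian N P c g σ.1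


/-- Euclidean gradient of the Hamiltonian. -/
def gradH (N P : ℕ) (c : ℕ → ℝ) (g : (k : ℕ) → (Fin k → Fin N) → ℝ)
    (σ : Fin N → ℝ) : Fin N → ℝ :=
  fun i => fderiv ℝ (hamiltonian N P c g) σ (Pi.single i 1)

/-- Euclidean Hessian of the Hamiltonian, as a bilinear form. -/
def hessH (N P : ℕ) (c : ℕ → ℝ) (g : (k : ℕ) → (Fin k → Fin N) → ℝ)
    (σ v w : Fin N → ℝ) : ℝ :=
  fderiv ℝ (fun τ => fderiv ℝ (hamiltonian N P c g) τ w) σ v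

/-- `σ` is a spherical critical point: `∇H(σ) = (⟨∇H(σ),σ⟩/N) σ`. -/
def IsCritPt (N P : ℕ) (c : ℕ → ℝ) (g : (k : ℕ) → (Fin k → Fin N) → ℝ)
    (σ : Fin N → ℝ) : Prop :=
  σ ∈ sphereSet N ∧ gradH N P c g σ = (dotp (gradH N P c g σ) σ / N) • σ

/-- Cardinality of a set, valued in `ℝ≥0∞`. -/
def ecount {α : Type*} (s : Set α) : ℝ≥0∞ := ∑' _ : s, 1

/-- Spherical critical points with energy at least `Nη`. -/
def crtSet (N P : ℕ) (c : ℕ → ℝ) (g : (k : ℕ) → (Fin k → Fin N) → ℝ)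
    (η : ℝ) : Set (Fin N → ℝ) :=
  {σ | IsCritPt N P c g σ ∧ (N : ℝ) * η ≤ hamiltonian N P c g σ}

/-- Index (number of negative eigenvalues) of the spherical Hessian quadratic form at `σ`:
maximal dimension of a subspace of the tangent space on which the form is negative definite. -/
def critIndex (N P : ℕ) (c : ℕ → ℝ) (g : (k : ℕ) → (Fin k → Fin N) → ℝ)
    (σ : Fin N → ℝ) : ℕ :=
  sSup {d : ℕ | ∃ W : Submodule ℝ (Fin N → ℝ), Module.finrank ℝ W = d ∧
    (∀ v ∈ W, dotp v σ = 0) ∧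
    ∀ v ∈ W, v ≠ 0 →
      hessH N P c g σ v v - (dotp (gradH N P c g σ) σ / N) * ∑ i, (v i) ^ 2 < 0}

/-- Critical points of index `N-1-k` in the superlevel set. -/
def crtSetIdx (N P : ℕ) (c : ℕ → ℝ) (g : (k : ℕ) → (Fin k → Fin N) → ℝ)
    (η : ℝ) (k : ℕ) : Set (Fin N → ℝ) :=
  {σ | σ ∈ crtSet N P c g η ∧ critIndex N P c g σ = N - 1 - k}

/-- Coefficients of the pure p-spin model. -/
def pureC (p : ℕ) : ℕ → ℝ := fun k => if k = p then 1 else 0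

/-- The uniform probability measure on the sphere `S_N`. -/
def sphereUniform (N : ℕ) : Measure (Fin N → ℝ) :=
  Measure.map (fun g i => Real.sqrt N * g i / Real.sqrt (∑ j, (g j) ^ 2))
    (Measure.pi fun _ : Fin N => gaussianReal 0 1)

/-- The band around `m`. -/
def band (N : ℕ) (m : Fin N → ℝ) (δ : ℝ) : Set (Fin N → ℝ) :=
  {σ | σ ∈ sphereSet N ∧ |dotp (σ - m) m| < N * δ}

/-- `k`-tuples from the band with pairwise overlaps close to `⟨m,m⟩`. -/
def bandK (N k : ℕ) (m : Fin N → ℝ) (δ ε : ℝ) : Set (Fin k → Fin N → ℝ) :=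
  {σs | (∀ i, σs i ∈ band N m δ) ∧
    ∀ i j, i ≠ j → |dotp (σs i) (σs j) - dotp m m| < N * ε}

/-- `∫₀ᵗ γ(s) ds`, valued in `ℝ≥0∞`. -/
def gammaLInt (γ : ℝ → ℝ) (t : ℝ) : ℝ≥0∞ := ∫⁻ s in Set.Ioo 0 t, ENNReal.ofReal (γ s)

/-- The zero-temperature spherical Parisi functional (Crisanti–Sommers form), with the
convention `1/0 = +∞`. -/
def PFunE (P : ℕ) (c : ℕ → ℝ) (γ : ℝ → ℝ) : ℝ≥0∞ :=
  ⨅ L ∈ {L : ℝ | gammaLInt γ 1 ≤ ENNReal.ofReal L},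
    (∫⁻ t in Set.Ioo (0 : ℝ) 1,
      (ENNReal.ofReal (xiD2 P c t * (L - (gammaLInt γ t).toReal))
        + (ENNReal.ofReal (L - (gammaLInt γ t).toReal))⁻¹)) / 2

/-- The space `𝒰` of order parameters: non-decreasing, non-negative, integrable on `[0,1)`. -/
def calU : Set (ℝ → ℝ) :=
  {γ | (∀ t ∈ Set.Ico (0 : ℝ) 1, 0 ≤ γ t) ∧ MonotoneOn γ (Set.Ico 0 1) ∧
    IntegrableOn γ (Set.Ioo 0 1)}

/-- The support of `γ`: points of `[0,1]` near which `γ` is not constant. -/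
def suppGamma (γ : ℝ → ℝ) : Set ℝ :=
  {q | q ∈ Set.Icc (0 : ℝ) 1 ∧ ∀ ε > 0, ∃ s ∈ Set.Ico (0 : ℝ) 1, ∃ t ∈ Set.Ico (0 : ℝ) 1,
    |s - q| < ε ∧ |t - q| < ε ∧ γ s ≠ γ t}

/-- The superlevel set `L_N(η)`. -/
def levelSet (N P : ℕ) (c : ℕ → ℝ) (g : (k : ℕ) → (Fin k → Fin N) → ℝ)
    (η : ℝ) : Set (Fin N → ℝ) :=
  {σ | σ ∈ sphereSet N ∧ (N : ℝ) * η ≤ hamiltonian N P c g σ}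

/-- Threshold energy of the pure p-spin model. -/
def THRp (p : ℕ) : ℝ := 2 * Real.sqrt (((p : ℝ) - 1) / p)

/-- The function `J` of the pure p-spin complexity. -/
def Jp (p : ℕ) (η : ℝ) : ℝ :=
  η / (THRp p) ^ 2 * Real.sqrt (η ^ 2 - (THRp p) ^ 2)
    - Real.log (η + Real.sqrt (η ^ 2 - (THRp p) ^ 2)) + Real.log (THRp p)

/-- The annealed complexity of the pure p-spin spherical model. -/
def SigmaPure (p : ℕ) (η : ℝ) : ℝ :=
  if η ≤ 0 then Real.log ((p : ℝ) - 1) / 2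
  else if η ≤ THRp p then
    Real.log ((p : ℝ) - 1) / 2 - ((p : ℝ) - 2) / (4 * ((p : ℝ) - 1)) * η ^ 2
  else Real.log ((p : ℝ) - 1) / 2 - ((p : ℝ) - 2) / (4 * ((p : ℝ) - 1)) * η ^ 2 - Jp p η

/-- Couplings, unflattened from a vector indexed by `GIdx N P`. -/
def unflatten (N P : ℕ) (g : GIdx N P → ℝ) : (k : ℕ) → (Fin k → Fin N) → ℝ :=
  fun k j => if h : k ∈ Finset.Icc 2 P then g ⟨⟨k, h⟩, j⟩ else 0

/-- `ξ'''`. -/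
def xiD3 (P : ℕ) (c : ℕ → ℝ) (x : ℝ) : ℝ :=
  ∑ k ∈ Finset.Icc 2 P, (k : ℝ) * ((k : ℝ) - 1) * ((k : ℝ) - 2) * (c k) ^ 2 * x ^ (k - 3)

/-!
Let `Γ(t) = L - ∫₀ᵗ γ` be the optimal profile and `G(s) = ∫₀ˢ (ξ'' - Γ⁻²)`, so that the first
variation of the energy in a direction `β - γ` supported in `[0, v]` is `∫₀ᵛ (β - γ) G`. Comparing
`γ` with the order parameter flattened to the value `γ a` on `(u, v)` shows that `γ` is constant on
`(u, v)` when `G < 0` on `(u, a)` and `G > 0` on `(a, v)`.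

With `R(s) = ∫₀ˢ Γ⁻²`, the function `G` has the sign of `s / R(s) - s / ξ'(s)`. Since the concave
function `Γ` lies below its tangents, `s / R(s)` is concave, so this difference is concave by the
hypothesis on `s / ξ'(s)` and is nonnegative exactly on an interval. Hence `γ` is constant above the
right end of that interval. It is also constant below: either the sign rule applies, or the
difference vanishes on a subinterval, where `s / R(s)` is then both convex and concave, and its
second derivative vanishes at `s` only if `γ` is constant on `(0, s)`.
-/

open Set Topology

section RealLine

variable {f : ℝ → ℝ} {u v : ℝ}

lemma eq_of_ae_eq_of_monotoneOn_Ioo {k : ℝ} (hf : MonotoneOn f (Ioo u v))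
    (h : ∀ᵐ t, t ∈ Ioo u v → f t = k) {t : ℝ} (ht : t ∈ Ioo u v) : f t = k := by
  obtain ⟨x, hxk, hx⟩ := (Measure.dense_of_ae h).exists_between ht.1
  obtain ⟨y, hyk, hy⟩ := (Measure.dense_of_ae h).exists_between ht.2
  have hxm : x ∈ Ioo u v := ⟨hx.1, hx.2.trans ht.2⟩
  have hym : y ∈ Ioo u v := ⟨ht.1.trans hy.1, hy.2⟩
  exact le_antisymm ((hf ht hym hy.1.le).trans_eq (hyk hym))
    ((hxk hxm).symm.trans_le (hf hxm ht hx.2.le))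

lemma exists_forall_neg_forall_nonneg_of_concaveOn {w : ℝ} (hf : ConcaveOn ℝ (Ioo u w) f)
    (hv : v ∈ Ioo u w) (hfv : 0 ≤ f v) :
    ∃ a ∈ Icc u v, (∀ t ∈ Ioo u a, f t < 0) ∧ ∀ t ∈ Ioo a v, 0 ≤ f t := by
  set S := {t ∈ Ioc u v | 0 ≤ f t}
  have hvS : v ∈ S := ⟨⟨hv.1, le_rfl⟩, hfv⟩
  have hbdd : BddBelow S := ⟨u, fun t ht => ht.1.1.le⟩
  have hSv : sInf S ≤ v := csInf_le hbdd hvS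
  refine ⟨sInf S, ⟨le_csInf ⟨v, hvS⟩ fun t ht => ht.1.1.le, hSv⟩, fun t ht => ?_, fun t ht => ?_⟩
  · by_contra! hft
    exact ht.2.not_ge (csInf_le hbdd ⟨⟨ht.1, ht.2.le.trans hSv⟩, hft⟩)
  · obtain ⟨x, hx, hxt⟩ := exists_lt_of_csInf_lt ⟨v, hvS⟩ ht.1
    exact ((hf.convex_ge 0).ordConnected.out ⟨⟨hx.1.1, hx.1.2.trans_lt hv.2⟩, hx.2⟩ ⟨hv, hfv⟩
      ⟨hxt.le, ht.2.le⟩).2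

lemma eq_zero_of_concaveOn_of_nonneg (hf : ConcaveOn ℝ (Ioo u v) f)
    (hnonneg : ∀ t ∈ Ioo u v, 0 ≤ f t) {y : ℝ} (hy : y ∈ Ioo u v) (hfy : f y = 0) {t : ℝ}
    (ht : t ∈ Ioo u v) : f t = 0 := by
  refine le_antisymm ?_ (hnonneg t ht)
  rcases le_total t y with hty | hyt
  · obtain ⟨x, hx⟩ := exists_between hy.2
    have hxm : x ∈ Ioo u v := ⟨hy.1.trans hx.1, hx.2⟩
    exact (hf.left_le_of_le_right'' ht hxm hty hx.1 (hfy.trans_le (hnonneg x hxm))).trans_eq hfy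
  · obtain ⟨x, hx⟩ := exists_between hy.1
    have hxm : x ∈ Ioo u v := ⟨hx.1, hx.2.trans hy.2⟩
    exact (hf.right_le_of_le_left'' hxm ht hx.2 hyt (hfy.trans_le (hnonneg x hxm))).trans_eq hfy

lemma integral_one_div_sq_affine {g c s : ℝ} (hg : 0 < g) (hc : 0 ≤ c) (hs : 0 ≤ s) :
    ∫ t in (0 : ℝ)..s, 1 / (g + c * (s - t)) ^ 2 = s / (g * (g + c * s)) := by
  have hpos : ∀ t ∈ uIcc 0 s, 0 < g + c * (s - t) := by
    intro t ht
    rw [uIcc_of_le hs] at ht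
    have := mul_nonneg hc (sub_nonneg.2 ht.2)
    linarith
  have hgcs : 0 < g + c * s := by positivity
  have hderiv : ∀ t ∈ uIcc 0 s, HasDerivAt (fun t => t / ((g + c * s) * (g + c * (s - t))))
      (1 / (g + c * (s - t)) ^ 2) t := by
    intro t ht
    have ht0 := (hpos t ht).ne'
    have hden : HasDerivAt (fun t => (g + c * s) * (g + c * (s - t)))
        ((g + c * s) * (c * (-1))) t :=
      ((((hasDerivAt_id' t).const_sub s).const_mul c).const_add g).const_mul _
    refine ((hasDerivAt_id' t).div hden (mul_ne_zero hgcs.ne' ht0)).congr_deriv ?_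
    field_simp
    ring
  rw [intervalIntegral.integral_eq_sub_of_hasDerivAt hderiv
    (ContinuousOn.intervalIntegrable (continuousOn_const.div (by fun_prop)
      fun t ht => pow_ne_zero 2 (hpos t ht).ne'))]
  simp only [sub_self, mul_zero, add_zero, zero_div, sub_zero, mul_comm]

end RealLine

section OrderParameter

variable {γ β : ℝ → ℝ} {p q : ℝ}

lemma intervalIntegrable_of_mem_calU (hγ : γ ∈ calU) (hp : p ∈ Icc (0 : ℝ) 1)
    (hq : q ∈ Icc (0 : ℝ) 1) : IntervalIntegrable γ volume p q := by
  have h01 : IntervalIntegrable γ volume 0 1 :=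
    (intervalIntegrable_iff_integrableOn_Ioo_of_le zero_le_one).2 hγ.2.2
  exact h01.mono_set ((uIcc_subset_Icc hp hq).trans Icc_subset_uIcc)

lemma integral_nonneg_of_mem_calU (hγ : γ ∈ calU) (hp : 0 ≤ p) (hpq : p ≤ q) (hq : q ≤ 1) :
    0 ≤ ∫ x in p..q, γ x := by
  rw [intervalIntegral.integral_of_le hpq, integral_Ioc_eq_integral_Ioo]
  exact setIntegral_nonneg measurableSet_Ioo fun x hx =>
    hγ.1 x ⟨hp.trans hx.1.le, hx.2.trans_le hq⟩

lemma integral_le_mul_of_mem_calU (hγ : γ ∈ calU) (hp : 0 ≤ p) (hpq : p ≤ q) (hq : q < 1) :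
    ∫ x in p..q, γ x ≤ γ q * (q - p) := by
  calc ∫ x in p..q, γ x ≤ ∫ _ in p..q, γ q :=
        intervalIntegral.integral_mono_on hpq
          (intervalIntegrable_of_mem_calU hγ ⟨hp, hpq.trans hq.le⟩ ⟨hp.trans hpq, hq.le⟩)
          intervalIntegrable_const fun x hx =>
            hγ.2.1 ⟨hp.trans hx.1, hx.2.trans_lt hq⟩ ⟨hp.trans hpq, hq⟩ hx.2
    _ = γ q * (q - p) := by rw [intervalIntegral.integral_const, smul_eq_mul, mul_comm]

lemma convex_calU : Convex ℝ calU := by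
  intro γ hγ β hβ a b ha hb _
  refine ⟨fun t ht => ?_, fun s hs t ht hst => ?_, (hγ.2.2.smul a).add (hβ.2.2.smul b)⟩
  · exact add_nonneg (mul_nonneg ha (hγ.1 t ht)) (mul_nonneg hb (hβ.1 t ht))
  · exact add_le_add (mul_le_mul_of_nonneg_left (hγ.2.1 hs ht hst) ha)
      (mul_le_mul_of_nonneg_left (hβ.2.1 hs ht hst) hb)

lemma zero_mem_calU : (0 : ℝ → ℝ) ∈ calU :=
  ⟨fun _ _ => le_rfl, fun _ _ _ _ _ => le_rfl, integrable_zero _ _ _⟩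

open Classical in
lemma piecewise_const_mem_calU (hγ : γ ∈ calU) {u a v : ℝ} (ha : a ∈ Ico (0 : ℝ) 1)
    (hua : u ≤ a) (hav : a ≤ v) : (Ioc u v).piecewise (fun _ => γ a) γ ∈ calU := by
  refine ⟨fun t ht => ?_, fun s hs t ht hst => ?_,
    Integrable.piecewise measurableSet_Ioc integrableOn_const hγ.2.2.integrableOn⟩
  · by_cases h : t ∈ Ioc u v <;> simp only [h, piecewise_eq_of_mem, piecewise_eq_of_notMem,
      not_false_eq_true]
    exacts [hγ.1 a ha, hγ.1 t ht]
  · by_cases h : s ∈ Ioc u v <;> by_cases h' : t ∈ Ioc u v <;>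
      simp only [h, h', piecewise_eq_of_mem, piecewise_eq_of_notMem, not_false_eq_true]
    · exact le_rfl
    · exact hγ.2.1 ha ht (hav.trans (not_le.1 fun htv => h' ⟨h.1.trans_le hst, htv⟩).le)
    · exact hγ.2.1 hs ha ((not_lt.1 fun hus => h ⟨hus, hst.trans h'.2⟩).trans hua)
    · exact hγ.2.1 hs ht hst

end OrderParameter

section Profile

variable {γ β : ℝ → ℝ} {L M s t : ℝ}

/-- The profile `Γ(t) = L - ∫₀ᵗ γ` of the order parameter `γ`. -/
def profile (L : ℝ) (γ : ℝ → ℝ) (t : ℝ) : ℝ := L - ∫ x in (0 : ℝ)..t, γ x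

@[simp] lemma profile_apply_zero : profile L γ 0 = L := by simp [profile]

lemma profile_sub_profile (hγ : γ ∈ calU) (ht : t ∈ Icc (0 : ℝ) 1) (hs : s ∈ Icc (0 : ℝ) 1) :
    profile L γ t - profile L γ s = ∫ x in t..s, γ x := by
  have h0 : (0 : ℝ) ∈ Icc (0 : ℝ) 1 := left_mem_Icc.2 zero_le_one
  rw [← intervalIntegral.integral_interval_sub_left (intervalIntegrable_of_mem_calU hγ h0 hs)
    (intervalIntegrable_of_mem_calU hγ h0 ht), profile, profile]
  ring

lemma profile_linearCombination (hγ : γ ∈ calU) (hβ : β ∈ calU) (a b : ℝ)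
    (ht : t ∈ Icc (0 : ℝ) 1) :
    profile (a * L + b * M) (a • γ + b • β) t = a * profile L γ t + b * profile M β t := by
  have h0 : (0 : ℝ) ∈ Icc (0 : ℝ) 1 := left_mem_Icc.2 zero_le_one
  simp only [profile, Pi.add_apply, Pi.smul_apply, smul_eq_mul]
  rw [intervalIntegral.integral_add ((intervalIntegrable_of_mem_calU hγ h0 ht).const_mul a)
    ((intervalIntegrable_of_mem_calU hβ h0 ht).const_mul b), intervalIntegral.integral_const_mul,
    intervalIntegral.integral_const_mul]
  ring

lemma antitoneOn_profile (hγ : γ ∈ calU) : AntitoneOn (profile L γ) (Icc 0 1) := by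
  intro t ht s hs hts
  rw [← sub_nonneg, profile_sub_profile hγ ht hs]
  exact integral_nonneg_of_mem_calU hγ ht.1 hts hs.2

lemma continuousOn_profile (hγ : γ ∈ calU) : ContinuousOn (profile L γ) (Icc 0 1) := by
  have h := intervalIntegral.continuousOn_primitive_interval'
    (intervalIntegrable_of_mem_calU hγ (left_mem_Icc.2 zero_le_one) (right_mem_Icc.2 zero_le_one))
    left_mem_uIcc
  rw [uIcc_of_le zero_le_one] at h
  exact continuousOn_const.sub h

lemma countable_not_hasDerivAt_profile (hγ : γ ∈ calU) (L : ℝ) :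
    {t ∈ Ioo (0 : ℝ) 1 | ¬HasDerivAt (profile L γ) (-γ t) t}.Countable := by
  refine hγ.2.1.countable_not_continuousWithinAt.mono fun t ⟨ht, hd⟩ => ?_
  refine ⟨Ioo_subset_Ico_self ht, fun hcont => hd ?_⟩
  exact (intervalIntegral.integral_hasDerivAt_right
    (intervalIntegrable_of_mem_calU hγ (left_mem_Icc.2 zero_le_one) (Ioo_subset_Icc_self ht))
    ⟨Ioo 0 1, isOpen_Ioo.mem_nhds ht, hγ.2.2.aestronglyMeasurable⟩
    (hcont.continuousAt (Ico_mem_nhds ht.1 ht.2))).const_sub L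

lemma profile_le_tangent (hγ : γ ∈ calU) (ht : 0 ≤ t) (hts : t ≤ s) (hs : s < 1) :
    profile L γ t ≤ profile L γ s + γ s * (s - t) := by
  rw [← sub_le_iff_le_add',
    profile_sub_profile hγ ⟨ht, hts.trans hs.le⟩ ⟨ht.trans hts, hs.le⟩]
  exact integral_le_mul_of_mem_calU hγ ht hts hs

lemma profile_zero_lt_tangent (hγ : γ ∈ calU) (ht : t ∈ Ioo 0 s) (hs : s < 1)
    (hlt : γ t < γ s) : profile L γ 0 < profile L γ s + γ s * s := by
  have hzero_le := profile_le_tangent (L := L) hγ le_rfl ht.1.le (ht.2.trans hs)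
  have hle := profile_le_tangent (L := L) hγ ht.1.le ht.2.le hs
  have hslope := mul_lt_mul_of_pos_right hlt ht.1
  linarith

end Profile

section InvSqIntegral

variable {γ : ℝ → ℝ} {L p q s t : ℝ}

/-- The integral `R(s) = ∫₀ˢ Γ⁻²` of the inverse square of the profile `Γ`. -/
def invSqIntegral (L : ℝ) (γ : ℝ → ℝ) (s : ℝ) : ℝ :=
  ∫ t in (0 : ℝ)..s, 1 / profile L γ t ^ 2

/-- The derivative `(R - s Γ⁻²) / R²` of `s ↦ s / R(s)`. -/
def divInvSqDeriv (L : ℝ) (γ : ℝ → ℝ) (s : ℝ) : ℝ :=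
  (invSqIntegral L γ s - s / profile L γ s ^ 2) / invSqIntegral L γ s ^ 2

/-- The second derivative of `s ↦ s / R(s)` wherever `Γ' = -γ`. -/
def divInvSqDeriv2 (L : ℝ) (γ : ℝ → ℝ) (s : ℝ) : ℝ :=
  2 * (s / profile L γ s - invSqIntegral L γ s * (profile L γ s + γ s * s)) /
    (invSqIntegral L γ s * profile L γ s) ^ 3

lemma continuousOn_one_div_profile_sq (hγ : γ ∈ calU)
    (hpos : ∀ t ∈ Ico (0 : ℝ) 1, 0 < profile L γ t) :
    ContinuousOn (fun t => 1 / profile L γ t ^ 2) (Ico 0 1) :=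
  continuousOn_const.div (((continuousOn_profile hγ).mono Ico_subset_Icc_self).pow 2)
    fun t ht => pow_ne_zero 2 (hpos t ht).ne'

lemma intervalIntegrable_one_div_profile_sq (hγ : γ ∈ calU)
    (hpos : ∀ t ∈ Ico (0 : ℝ) 1, 0 < profile L γ t) (hs : s ∈ Ico (0 : ℝ) 1) :
    IntervalIntegrable (fun t => 1 / profile L γ t ^ 2) volume 0 s :=
  ((continuousOn_one_div_profile_sq hγ hpos).mono
    (ordConnected_Ico.uIcc_subset (left_mem_Ico.2 zero_lt_one) hs)).intervalIntegrable

lemma invSqIntegral_pos (hγ : γ ∈ calU) (hpos : ∀ t ∈ Ico (0 : ℝ) 1, 0 < profile L γ t)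
    (hs : s ∈ Ioo (0 : ℝ) 1) : 0 < invSqIntegral L γ s :=
  intervalIntegral.intervalIntegral_pos_of_pos_on
    (intervalIntegrable_one_div_profile_sq hγ hpos (Ioo_subset_Ico_self hs))
    (fun t ht => one_div_pos.2 (pow_pos (hpos t ⟨ht.1.le, ht.2.trans hs.2⟩) 2)) hs.1

lemma hasDerivAt_invSqIntegral (hγ : γ ∈ calU)
    (hpos : ∀ t ∈ Ico (0 : ℝ) 1, 0 < profile L γ t) (hs : s ∈ Ioo (0 : ℝ) 1) :
    HasDerivAt (invSqIntegral L γ) (1 / profile L γ s ^ 2) s := by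
  have hc := (continuousOn_one_div_profile_sq hγ hpos).mono Ioo_subset_Ico_self
  exact intervalIntegral.integral_hasDerivAt_right
    (intervalIntegrable_one_div_profile_sq hγ hpos (Ioo_subset_Ico_self hs))
    (hc.stronglyMeasurableAtFilter isOpen_Ioo s hs) (hc.continuousAt (isOpen_Ioo.mem_nhds hs))

lemma div_tangent_le_invSqIntegral (hγ : γ ∈ calU)
    (hpos : ∀ t ∈ Ico (0 : ℝ) 1, 0 < profile L γ t) (hs : s ∈ Ioo (0 : ℝ) 1) :
    s / (profile L γ s * (profile L γ s + γ s * s)) ≤ invSqIntegral L γ s ∧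
      ∀ t ∈ Ioo 0 s, γ t < γ s →
        s / (profile L γ s * (profile L γ s + γ s * s)) < invSqIntegral L γ s := by
  have hΓs := hpos s (Ioo_subset_Ico_self hs)
  have hγs := hγ.1 s (Ioo_subset_Ico_self hs)
  have hIcc : Icc 0 s ⊆ Ico 0 1 := Icc_subset_Ico_right hs.2
  have htan : ∀ t ∈ Icc 0 s, 0 < profile L γ s + γ s * (s - t) := fun t ht =>
    add_pos_of_pos_of_nonneg hΓs (mul_nonneg hγs (sub_nonneg.2 ht.2))
  have hle : ∀ t ∈ Icc 0 s,
      1 / (profile L γ s + γ s * (s - t)) ^ 2 ≤ 1 / profile L γ t ^ 2 := fun t ht =>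
    one_div_le_one_div_of_le (pow_pos (hpos t (hIcc ht)) 2)
      (pow_le_pow_left₀ (hpos t (hIcc ht)).le (profile_le_tangent hγ ht.1 ht.2 hs.2) 2)
  have hcont : ContinuousOn (fun t => 1 / (profile L γ s + γ s * (s - t)) ^ 2) (Icc 0 s) :=
    continuousOn_const.div (by fun_prop) fun t ht => pow_ne_zero 2 (htan t ht).ne'
  have hcontΓ := (continuousOn_one_div_profile_sq hγ hpos).mono hIcc
  rw [← integral_one_div_sq_affine hΓs hγs hs.1.le]
  refine ⟨intervalIntegral.integral_mono_on hs.1.le (hcont.intervalIntegrable_of_Icc hs.1.le)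
    (hcontΓ.intervalIntegrable_of_Icc hs.1.le) hle, fun t ht hlt => ?_⟩
  refine intervalIntegral.integral_lt_integral_of_continuousOn_of_le_of_exists_lt hs.1 hcont hcontΓ
    (fun x hx => hle x (Ioc_subset_Icc_self hx)) ⟨0, left_mem_Icc.2 hs.1.le, ?_⟩
  have hL := hpos 0 (left_mem_Ico.2 zero_lt_one)
  rw [sub_zero]
  exact one_div_lt_one_div_of_lt (pow_pos hL 2)
    (pow_lt_pow_left₀ (profile_zero_lt_tangent hγ ht hs.2 hlt) hL.le two_ne_zero)

lemma divInvSqDeriv2_nonpos (hγ : γ ∈ calU) (hpos : ∀ t ∈ Ico (0 : ℝ) 1, 0 < profile L γ t)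
    (hs : s ∈ Ioo (0 : ℝ) 1) : divInvSqDeriv2 L γ s ≤ 0 := by
  have hΓ := hpos s (Ioo_subset_Ico_self hs)
  have hR := invSqIntegral_pos hγ hpos hs
  have htan : 0 < profile L γ s + γ s * s :=
    add_pos_of_pos_of_nonneg hΓ (mul_nonneg (hγ.1 s (Ioo_subset_Ico_self hs)) hs.1.le)
  have hle := (div_tangent_le_invSqIntegral hγ hpos hs).1
  rw [← div_div, div_le_iff₀ htan] at hle
  exact div_nonpos_of_nonpos_of_nonneg (by linarith) (pow_pos (mul_pos hR hΓ) 3).le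

lemma divInvSqDeriv2_neg (hγ : γ ∈ calU) (hpos : ∀ t ∈ Ico (0 : ℝ) 1, 0 < profile L γ t)
    (hs : s ∈ Ioo (0 : ℝ) 1) (ht : t ∈ Ioo 0 s) (hlt : γ t < γ s) :
    divInvSqDeriv2 L γ s < 0 := by
  have hΓ := hpos s (Ioo_subset_Ico_self hs)
  have hR := invSqIntegral_pos hγ hpos hs
  have htan : 0 < profile L γ s + γ s * s :=
    add_pos_of_pos_of_nonneg hΓ (mul_nonneg (hγ.1 s (Ioo_subset_Ico_self hs)) hs.1.le)
  have hlt := (div_tangent_le_invSqIntegral hγ hpos hs).2 t ht hlt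
  rw [← div_div, div_lt_iff₀ htan] at hlt
  exact div_neg_of_neg_of_pos (by linarith) (pow_pos (mul_pos hR hΓ) 3)

lemma hasDerivAt_div_invSqIntegral (hγ : γ ∈ calU)
    (hpos : ∀ t ∈ Ico (0 : ℝ) 1, 0 < profile L γ t) (hs : s ∈ Ioo (0 : ℝ) 1) :
    HasDerivAt (fun s => s / invSqIntegral L γ s) (divInvSqDeriv L γ s) s := by
  refine ((hasDerivAt_id' s).div (hasDerivAt_invSqIntegral hγ hpos hs)
    (invSqIntegral_pos hγ hpos hs).ne').congr_deriv ?_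
  rw [divInvSqDeriv, one_mul, mul_one_div]

lemma hasDerivAt_divInvSqDeriv (hγ : γ ∈ calU)
    (hpos : ∀ t ∈ Ico (0 : ℝ) 1, 0 < profile L γ t) (hs : s ∈ Ioo (0 : ℝ) 1)
    (hd : HasDerivAt (profile L γ) (-γ s) s) :
    HasDerivAt (divInvSqDeriv L γ) (divInvSqDeriv2 L γ s) s := by
  have hΓ := (hpos s (Ioo_subset_Ico_self hs)).ne'
  have hR := (invSqIntegral_pos hγ hpos hs).ne'
  have hRd := hasDerivAt_invSqIntegral hγ hpos hs
  refine ((hRd.sub ((hasDerivAt_id' s).div (hd.pow 2) (pow_ne_zero 2 hΓ))).div (hRd.pow 2)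
    (pow_ne_zero 2 hR)).congr_deriv ?_
  simp only [divInvSqDeriv2, Pi.sub_apply, Pi.div_apply, Pi.pow_apply]
  field_simp
  ring

lemma antitoneOn_divInvSqDeriv (hγ : γ ∈ calU)
    (hpos : ∀ t ∈ Ico (0 : ℝ) 1, 0 < profile L γ t) :
    AntitoneOn (divInvSqDeriv L γ) (Ioo 0 1) := by
  intro p hp q hq hpq
  have hsub : Icc p q ⊆ Ioo 0 1 := Icc_subset_Ioo hp.1 hq.2
  have hΓc : ContinuousOn (profile L γ) (Icc p q) :=
    (continuousOn_profile hγ).mono (hsub.trans Ioo_subset_Icc_self)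
  have hRc : ContinuousOn (invSqIntegral L γ) (Icc p q) := fun s hs =>
    (hasDerivAt_invSqIntegral hγ hpos (hsub hs)).continuousAt.continuousWithinAt
  have hΓ : ∀ s ∈ Icc p q, profile L γ s ≠ 0 := fun s hs =>
    (hpos s (Ioo_subset_Ico_self (hsub hs))).ne'
  have hR : ∀ s ∈ Icc p q, invSqIntegral L γ s ≠ 0 := fun s hs =>
    (invSqIntegral_pos hγ hpos (hsub hs)).ne'
  have hDc : ContinuousOn (divInvSqDeriv L γ) (Icc p q) :=
    (hRc.sub (continuousOn_id.div (hΓc.pow 2) fun s hs => pow_ne_zero 2 (hΓ s hs))).div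
      (hRc.pow 2) fun s hs => pow_ne_zero 2 (hR s hs)
  have hDi : IntervalIntegrable (divInvSqDeriv2 L γ) volume p q := by
    rw [← uIcc_of_le hpq] at hΓc hRc hΓ hR
    exact ((((continuousOn_id.div hΓc hΓ).intervalIntegrable).sub
      ((hΓc.intervalIntegrable.add ((intervalIntegrable_of_mem_calU hγ (Ioo_subset_Icc_self hp)
        (Ioo_subset_Icc_self hq)).mul_continuousOn continuousOn_id)).continuousOn_mul
          hRc)).const_mul 2).mul_continuousOn
      (((hRc.mul hΓc).pow 3).inv₀ fun s hs => pow_ne_zero 3 (mul_ne_zero (hR s hs) (hΓ s hs)))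
  have hint : ∫ s in p..q, divInvSqDeriv2 L γ s = divInvSqDeriv L γ q - divInvSqDeriv L γ p :=
    integral_eq_of_hasDerivAt_off_countable_of_le _ _ hpq (countable_not_hasDerivAt_profile hγ L)
      hDc (fun s ⟨hs, hd⟩ => hasDerivAt_divInvSqDeriv hγ hpos (hsub (Ioo_subset_Icc_self hs))
        (not_not.1 fun h => hd ⟨hsub (Ioo_subset_Icc_self hs), h⟩)) hDi
  rw [← sub_nonpos, ← hint, intervalIntegral.integral_of_le hpq]
  exact setIntegral_nonpos measurableSet_Ioc fun s hs =>
    divInvSqDeriv2_nonpos hγ hpos (hsub (Ioc_subset_Icc_self hs))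

lemma concaveOn_div_invSqIntegral (hγ : γ ∈ calU)
    (hpos : ∀ t ∈ Ico (0 : ℝ) 1, 0 < profile L γ t) :
    ConcaveOn ℝ (Ioo 0 1) fun s => s / invSqIntegral L γ s := by
  have hd := fun s (hs : s ∈ Ioo (0 : ℝ) 1) => hasDerivAt_div_invSqIntegral hγ hpos hs
  refine AntitoneOn.concaveOn_of_deriv (convex_Ioo 0 1)
    (fun s hs => (hd s hs).continuousAt.continuousWithinAt) ?_ ?_ <;> rw [interior_Ioo]
  · exact fun s hs => (hd s hs).differentiableAt.differentiableWithinAt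
  · exact (antitoneOn_divInvSqDeriv hγ hpos).congr fun s hs => (hd s hs).deriv.symm

/-- `s / R(s)` is affine where it is convex, and its second derivative vanishes only if `γ` is
constant up to `s`. -/
lemma eq_of_convexOn_div_invSqIntegral (hγ : γ ∈ calU)
    (hpos : ∀ t ∈ Ico (0 : ℝ) 1, 0 < profile L γ t) {a v : ℝ} (ha : 0 ≤ a) (hav : a < v)
    (hv : v ≤ 1) (hconv : ConvexOn ℝ (Ioo a v) fun s => s / invSqIntegral L γ s)
    (hs : s ∈ Ioo 0 v) (ht : t ∈ Ioo 0 v) : γ s = γ t := by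
  have hsub : Ioo a v ⊆ Ioo 0 1 := Ioo_subset_Ioo ha hv
  have hd := fun s (hs : s ∈ Ioo a v) => hasDerivAt_div_invSqIntegral hγ hpos (hsub hs)
  have hmono : MonotoneOn (divInvSqDeriv L γ) (Ioo a v) :=
    (hconv.monotoneOn_deriv fun s hs => (hd s hs).differentiableAt).congr
      fun s hs => (hd s hs).deriv
  obtain ⟨r, hr, hr'⟩ := ((countable_not_hasDerivAt_profile hγ L).dense_compl ℝ).exists_between
    (max_lt hav (max_lt hs.2 ht.2))
  obtain ⟨har, hsr, htr⟩ : a < r ∧ s < r ∧ t < r := by simpa only [max_lt_iff] using hr'.1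
  have hrm : r ∈ Ioo a v := ⟨har, hr'.2⟩
  have hzero : divInvSqDeriv2 L γ r = 0 := by
    have hconst : divInvSqDeriv L γ =ᶠ[𝓝 r] fun _ => divInvSqDeriv L γ r := by
      filter_upwards [isOpen_Ioo.mem_nhds hrm] with x hx
      rcases le_total x r with hxr | hrx
      · exact le_antisymm (hmono hx hrm hxr)
          (antitoneOn_divInvSqDeriv hγ hpos (hsub hx) (hsub hrm) hxr)
      · exact le_antisymm (antitoneOn_divInvSqDeriv hγ hpos (hsub hrm) (hsub hx) hrx)
          (hmono hrm hx hrx)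
    exact (hasDerivAt_divInvSqDeriv hγ hpos (hsub hrm)
      (not_not.1 fun h => hr ⟨hsub hrm, h⟩)).unique
        ((hasDerivAt_const r _).congr_of_eventuallyEq hconst)
  have hconst : ∀ x ∈ Ioo 0 r, γ x = γ r := fun x hx => by
    refine (hγ.2.1 ⟨hx.1.le, hx.2.trans (hsub hrm).2⟩ (Ioo_subset_Ico_self (hsub hrm))
      hx.2.le).antisymm (not_lt.1 fun hlt => ?_)
    exact (divInvSqDeriv2_neg hγ hpos (hsub hrm) hx hlt).ne hzero
  rw [hconst s ⟨hs.1, hsr⟩, hconst t ⟨ht.1, htr⟩]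

end InvSqIntegral

section Energy

variable {f γ β : ℝ → ℝ} {L M t : ℝ}

/-- The integrand `a w + 1 / w` of the Parisi functional where `ξ''` equals `a` and the profile
equals `w`; as an extended nonnegative real it is `∞` for `w ≤ 0`. -/
def energyDensity (a w : ℝ) : ℝ≥0∞ := ENNReal.ofReal (a * w) + (ENNReal.ofReal w)⁻¹

/-- Twice the quantity whose infimum over `L` is the Parisi functional at `γ`, for a general weight
`f` in place of `ξ''`. -/
def energy (f : ℝ → ℝ) (L : ℝ) (γ : ℝ → ℝ) : ℝ≥0∞ :=
  ∫⁻ t in Ioo 0 1, energyDensity (f t) (profile L γ t)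

/-- The Parisi functional `PFunE` for a general weight `f` in place of `ξ''`. -/
def parisiFunctional (f γ : ℝ → ℝ) : ℝ≥0∞ :=
  ⨅ L ∈ {L : ℝ | gammaLInt γ 1 ≤ ENNReal.ofReal L},
    (∫⁻ t in Ioo (0 : ℝ) 1, energyDensity (f t) (L - (gammaLInt γ t).toReal)) / 2

/-- The pair `(L, γ)` minimizes the energy among all pairs with a nonnegative profile; the profile
being non-increasing, this is a condition at `1` only. -/
structure IsEnergyMin (f : ℝ → ℝ) (L : ℝ) (γ : ℝ → ℝ) : Prop where
  mem_calU : γ ∈ calU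
  profile_one_nonneg : 0 ≤ profile L γ 1
  energy_le : ∀ β ∈ calU, ∀ M, 0 ≤ profile M β 1 → energy f L γ ≤ energy f M β

lemma gammaLInt_eq_ofReal (hγ : γ ∈ calU) (ht : t ∈ Icc (0 : ℝ) 1) :
    gammaLInt γ t = ENNReal.ofReal (∫ x in (0 : ℝ)..t, γ x) := by
  rw [intervalIntegral.integral_of_le ht.1, integral_Ioc_eq_integral_Ioo, gammaLInt,
    ofReal_integral_eq_lintegral_ofReal (hγ.2.2.mono_set (Ioo_subset_Ioo_right ht.2))]
  filter_upwards [ae_restrict_mem measurableSet_Ioo] with x hx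
  exact hγ.1 x ⟨hx.1.le, hx.2.trans_le ht.2⟩

lemma sub_toReal_gammaLInt (hγ : γ ∈ calU) (ht : t ∈ Icc (0 : ℝ) 1) :
    L - (gammaLInt γ t).toReal = profile L γ t := by
  rw [gammaLInt_eq_ofReal hγ ht,
    ENNReal.toReal_ofReal (integral_nonneg_of_mem_calU hγ le_rfl ht.1 ht.2), profile]

lemma energy_eq_top_of_profile_nonpos (hγ : γ ∈ calU) (ht : t ∈ Ico (0 : ℝ) 1)
    (h : profile L γ t ≤ 0) : energy f L γ = ⊤ := by
  rw [eq_top_iff]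
  calc (⊤ : ℝ≥0∞) = ∫⁻ _ in Ioo t 1, ⊤ := by
        rw [setLIntegral_const, ENNReal.top_mul]
        simpa only [Real.volume_Ioo, ne_eq, ENNReal.ofReal_eq_zero, not_le, sub_pos] using ht.2
    _ = ∫⁻ s in Ioo t 1, energyDensity (f s) (profile L γ s) := by
        refine setLIntegral_congr_fun measurableSet_Ioo fun s hs => ?_
        have hs0 : profile L γ s ≤ 0 := (antitoneOn_profile hγ (Ico_subset_Icc_self ht)
          ⟨ht.1.trans hs.1.le, hs.2.le⟩ hs.1.le).trans h
        simp only [energyDensity, ENNReal.ofReal_of_nonpos hs0, ENNReal.inv_zero, add_top]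
    _ ≤ energy f L γ := lintegral_mono_set (Ioo_subset_Ioo_left ht.1)

lemma profile_pos_of_energy_ne_top (hγ : γ ∈ calU) (h : energy f L γ ≠ ⊤) :
    ∀ t ∈ Ico (0 : ℝ) 1, 0 < profile L γ t := fun _ ht =>
  not_le.1 fun h0 => h (energy_eq_top_of_profile_nonpos hγ ht h0)

lemma parisiFunctional_eq_iInf_energy (hγ : γ ∈ calU) :
    parisiFunctional f γ = ⨅ (L : ℝ) (_ : 0 ≤ profile L γ 1), energy f L γ / 2 := by
  have h01 : (1 : ℝ) ∈ Icc (0 : ℝ) 1 := right_mem_Icc.2 zero_le_one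
  have henergy : ∀ L, ∫⁻ t in Ioo (0 : ℝ) 1, energyDensity (f t) (L - (gammaLInt γ t).toReal) =
      energy f L γ := fun L => setLIntegral_congr_fun measurableSet_Ioo fun t ht => by
    simp only [sub_toReal_gammaLInt hγ (Ioo_subset_Icc_self ht)]
  simp only [parisiFunctional, henergy, gammaLInt_eq_ofReal hγ h01, mem_ofPred_eq]
  refine le_antisymm (le_iInf₂ fun L hL => iInf₂_le L (ENNReal.ofReal_le_ofReal (sub_nonneg.1 hL)))
    (le_iInf₂ fun L hL => ?_)
  rcases ENNReal.ofReal_le_ofReal_iff'.1 hL with hL | hL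
  · exact iInf₂_le L (sub_nonneg.2 hL)
  · by_cases hL0 : L ≤ 0
    · rw [energy_eq_top_of_profile_nonpos hγ (left_mem_Ico.2 zero_lt_one)
        (profile_apply_zero.trans_le hL0), ENNReal.top_div_of_ne_top ENNReal.ofNat_ne_top]
      exact le_top
    · exact iInf₂_le L (sub_nonneg.2 (hL.trans (not_le.1 hL0).le))

lemma energy_ne_top (hf : ContinuousOn f (Icc 0 1)) (hγ : γ ∈ calU) (h : 0 < profile L γ 1) :
    energy f L γ ≠ ⊤ := by
  have hint : IntegrableOn (fun t => f t * profile L γ t) (Ioo 0 1) :=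
    (hf.mul (continuousOn_profile hγ)).integrableOn_Icc.mono_set Ioo_subset_Icc_self
  have hle : energy f L γ ≤ ∫⁻ t in Ioo 0 1,
      (ENNReal.ofReal (f t * profile L γ t) + (ENNReal.ofReal (profile L γ 1))⁻¹) :=
    setLIntegral_mono' measurableSet_Ioo fun t ht => add_le_add_right (ENNReal.inv_le_inv.2
      (ENNReal.ofReal_le_ofReal (antitoneOn_profile hγ (Ioo_subset_Icc_self ht)
        (right_mem_Icc.2 zero_le_one) ht.2.le))) _
  refine ne_top_of_le_ne_top ?_ hle
  rw [lintegral_add_right _ measurable_const, setLIntegral_const]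
  refine ENNReal.add_ne_top.2 ⟨hint.lintegral_lt_top.ne, ENNReal.mul_ne_top ?_ ?_⟩
  · exact ENNReal.inv_ne_top.2 (ENNReal.ofReal_pos.2 h).ne'
  · exact measure_Ioo_lt_top.ne

lemma continuous_energyDensity (a : ℝ) : Continuous (energyDensity a) :=
  (ENNReal.continuous_ofReal.comp (continuous_const_mul a)).add ENNReal.continuous_ofReal.inv

lemma lowerSemicontinuous_energy (hf : ContinuousOn f (Icc 0 1)) (hγ : γ ∈ calU) :
    LowerSemicontinuous fun L => energy f L γ := by
  have hmeas : ∀ L, AEMeasurable (fun t => energyDensity (f t) (profile L γ t))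
      (volume.restrict (Ioo 0 1)) := fun L => by
    have hf' := (hf.mono Ioo_subset_Icc_self).aemeasurable (μ := volume) measurableSet_Ioo
    have hΓ := ((continuousOn_profile (L := L) hγ).mono Ioo_subset_Icc_self).aemeasurable
      (μ := volume) measurableSet_Ioo
    exact (hf'.mul hΓ).ennreal_ofReal.add hΓ.ennreal_ofReal.inv
  refine fun L => lowerSemicontinuousAt_iff_le_liminf.2 ?_
  calc energy f L γ
      = ∫⁻ t in Ioo (0 : ℝ) 1, liminf (fun M => energyDensity (f t) (profile M γ t)) (𝓝 L) :=
        lintegral_congr fun t => (((continuous_energyDensity (f t)).comp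
          (continuous_id.sub continuous_const)).tendsto L).liminf_eq.symm
    _ ≤ liminf (fun M => energy f M γ) (𝓝 L) := lintegral_liminf_le' hmeas

lemma ofReal_integral_mul_profile_le_energy (hf : ContinuousOn f (Icc 0 1))
    (hf0 : ∀ t ∈ Icc (0 : ℝ) 1, 0 ≤ f t) (hγ : γ ∈ calU) :
    ENNReal.ofReal ((∫ t in (0 : ℝ)..1, f t) * profile L γ 1) ≤ energy f L γ := by
  rcases le_total (profile L γ 1) 0 with hL | hL
  · rw [ENNReal.ofReal_of_nonpos (mul_nonpos_of_nonneg_of_nonpos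
      (intervalIntegral.integral_nonneg zero_le_one hf0) hL)]
    exact zero_le
  · rw [← intervalIntegral.integral_mul_const, intervalIntegral.integral_of_le zero_le_one,
      integral_Ioc_eq_integral_Ioo, ofReal_integral_eq_lintegral_ofReal
        ((hf.integrableOn_Icc.mono_set Ioo_subset_Icc_self).mul_const _)]
    · refine setLIntegral_mono' measurableSet_Ioo fun t ht => le_add_right
        (ENNReal.ofReal_le_ofReal (mul_le_mul_of_nonneg_left ?_ (hf0 t (Ioo_subset_Icc_self ht))))
      exact antitoneOn_profile hγ (Ioo_subset_Icc_self ht) (right_mem_Icc.2 zero_le_one) ht.2.le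
    · filter_upwards [ae_restrict_mem measurableSet_Ioo] with t ht
      exact mul_nonneg (hf0 t (Ioo_subset_Icc_self ht)) hL

/-- The lower bound of `ofReal_integral_mul_profile_le_energy` makes the energy coercive in `L`. -/
lemma exists_forall_energy_le (hf : ContinuousOn f (Icc 0 1))
    (hf0 : ∀ t ∈ Icc (0 : ℝ) 1, 0 ≤ f t) (hF : 0 < ∫ t in (0 : ℝ)..1, f t) (hγ : γ ∈ calU) :
    ∃ L, 0 ≤ profile L γ 1 ∧ ∀ M, 0 ≤ profile M γ 1 → energy f L γ ≤ energy f M γ := by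
  set I := ∫ t in (0 : ℝ)..1, γ t
  set F := ∫ t in (0 : ℝ)..1, f t
  set E := energy f (I + 1) γ
  have hE : E ≠ ⊤ := energy_ne_top hf hγ (by simp [profile, I])
  set K := I + max 1 (E.toReal / F)
  have hIK : I + 1 ≤ K := by simp [K]
  obtain ⟨L, hL, hmin⟩ := LowerSemicontinuousOn.exists_isMinOn (nonempty_Icc.2 (by linarith))
    isCompact_Icc ((lowerSemicontinuous_energy hf hγ).lowerSemicontinuousOn (Icc I K))
  refine ⟨L, sub_nonneg.2 hL.1, fun M hM => ?_⟩
  rcases le_total M K with hMK | hKM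
  · exact hmin ⟨sub_nonneg.1 hM, hMK⟩
  · have hM' : E.toReal / F ≤ profile M γ 1 :=
      le_sub_iff_add_le'.2 ((add_le_add_right (le_max_right _ _) I).trans hKM)
    calc energy f L γ ≤ E := hmin ⟨by linarith, hIK⟩
      _ = ENNReal.ofReal E.toReal := (ENNReal.ofReal_toReal hE).symm
      _ ≤ ENNReal.ofReal (F * profile M γ 1) :=
          ENNReal.ofReal_le_ofReal ((div_le_iff₀' hF).1 hM')
      _ ≤ energy f M γ := ofReal_integral_mul_profile_le_energy hf hf0 hγ

lemma exists_isEnergyMin (hf : ContinuousOn f (Icc 0 1)) (hf0 : ∀ t ∈ Icc (0 : ℝ) 1, 0 ≤ f t)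
    (hF : 0 < ∫ t in (0 : ℝ)..1, f t) (hγ : γ ∈ calU)
    (hmin : IsMinOn (parisiFunctional f) calU γ) : ∃ L, IsEnergyMin f L γ := by
  obtain ⟨L, hL, hLmin⟩ := exists_forall_energy_le hf hf0 hF hγ
  refine ⟨L, hγ, hL, fun β hβ M hM => ?_⟩
  have hle : energy f L γ / 2 ≤ energy f M β / 2 :=
    calc energy f L γ / 2 ≤ parisiFunctional f γ := by
          rw [parisiFunctional_eq_iInf_energy hγ]
          exact le_iInf₂ fun K hK => ENNReal.div_le_div_right (hLmin K hK) 2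
      _ ≤ parisiFunctional f β := hmin hβ
      _ ≤ energy f M β / 2 := by
          rw [parisiFunctional_eq_iInf_energy hβ]
          exact iInf₂_le M hM
  simpa only [ENNReal.div_mul_cancel two_ne_zero ENNReal.ofNat_ne_top] using
    mul_le_mul_left hle 2

lemma IsEnergyMin.energy_ne_top (hf : ContinuousOn f (Icc 0 1)) (h : IsEnergyMin f L γ) :
    energy f L γ ≠ ⊤ := by
  have hpos : 0 < profile 1 0 1 := by simp [profile]
  exact ne_top_of_le_ne_top (_root_.energy_ne_top hf zero_mem_calU hpos)
    (h.energy_le 0 zero_mem_calU 1 hpos.le)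

lemma IsEnergyMin.profile_pos (hf : ContinuousOn f (Icc 0 1)) (h : IsEnergyMin f L γ) :
    ∀ t ∈ Ico (0 : ℝ) 1, 0 < profile L γ t :=
  profile_pos_of_energy_ne_top h.mem_calU (h.energy_ne_top hf)

end Energy

section Variation

variable {f γ β : ℝ → ℝ} {L M u v : ℝ}

lemma continuousOn_intervalIntegral_of_isCompact {q : ℝ → ℝ → ℝ} {K : Set ℝ} (hK : IsCompact K)
    (hq : ContinuousOn (Function.uncurry q) (K ×ˢ uIcc u v)) :
    ContinuousOn (fun ε => ∫ t in u..v, q ε t) K := by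
  obtain ⟨B, hB⟩ := (hK.prod isCompact_uIcc).exists_bound_of_continuousOn hq
  refine fun ε hε => intervalIntegral.continuousWithinAt_of_dominated_interval (bound := fun _ => B)
    ?_ ?_ intervalIntegrable_const (ae_of_all _ fun t ht => ?_)
  · filter_upwards [self_mem_nhdsWithin] with δ hδ
    exact ((hq.uncurry_left δ hδ).mono uIoc_subset_uIcc).aestronglyMeasurable measurableSet_uIoc
  · filter_upwards [self_mem_nhdsWithin] with δ hδ
    exact ae_of_all _ fun t ht => hB (δ, t) ⟨hδ, uIoc_subset_uIcc ht⟩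
  · exact hq.uncurry_right t (uIoc_subset_uIcc ht) ε hε

lemma add_one_div_sub_add_one_div {x a b ε : ℝ} (ha : a ≠ 0) (hw : (1 - ε) * a + ε * b ≠ 0) :
    (x * ((1 - ε) * a + ε * b) + 1 / ((1 - ε) * a + ε * b)) - (x * a + 1 / a) =
      ε * ((b - a) * (x - 1 / (a * ((1 - ε) * a + ε * b)))) := by
  field_simp
  ring

lemma continuousOn_mul_add_one_div {w : ℝ → ℝ} {s : Set ℝ} (hf : ContinuousOn f s)
    (hw : ContinuousOn w s) (hw0 : ∀ t ∈ s, 0 < w t) :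
    ContinuousOn (fun t => f t * w t + 1 / w t) s :=
  (hf.mul hw).add (continuousOn_const.div hw fun t ht => (hw0 t ht).ne')

lemma integral_sub_mul_sub_one_div_sq_nonneg {a b : ℝ → ℝ} (huv : u ≤ v)
    (hf : ContinuousOn f (Icc u v)) (ha : ContinuousOn a (Icc u v)) (hb : ContinuousOn b (Icc u v))
    (ha0 : ∀ t ∈ Icc u v, 0 < a t) (hb0 : ∀ t ∈ Icc u v, 0 < b t)
    (hmin : ∀ ε ∈ Ioc (0 : ℝ) 1, ∫ t in u..v, (f t * a t + 1 / a t) ≤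
      ∫ t in u..v, (f t * ((1 - ε) * a t + ε * b t) + 1 / ((1 - ε) * a t + ε * b t))) :
    0 ≤ ∫ t in u..v, (b t - a t) * (f t - 1 / a t ^ 2) := by
  rw [← uIcc_of_le huv] at hf ha hb ha0 hb0
  set w : ℝ → ℝ → ℝ := fun ε t => (1 - ε) * a t + ε * b t
  set q : ℝ → ℝ → ℝ := fun ε t => (b t - a t) * (f t - 1 / (a t * w ε t))
  have hw0 : ∀ ε ∈ Icc (0 : ℝ) 1, ∀ t ∈ uIcc u v, 0 < w ε t := fun ε hε t ht =>
    (convex_Ioi (0 : ℝ)) (ha0 t ht) (hb0 t ht) (sub_nonneg.2 hε.2) hε.1 (sub_add_cancel 1 ε)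
  have hq : ContinuousOn (Function.uncurry q) (Icc 0 1 ×ˢ uIcc u v) := by
    have hsnd : MapsTo Prod.snd (Icc (0 : ℝ) 1 ×ˢ uIcc u v) (uIcc u v) := fun _ h => h.2
    have hf' := hf.comp continuousOn_snd hsnd
    have ha' := ha.comp continuousOn_snd hsnd
    have hb' := hb.comp continuousOn_snd hsnd
    have hw' : ContinuousOn (Function.uncurry w) (Icc 0 1 ×ˢ uIcc u v) :=
      ((continuousOn_const.sub continuousOn_fst).mul ha').add (continuousOn_fst.mul hb')
    exact (hb'.sub ha').mul (hf'.sub (continuousOn_const.div (ha'.mul hw')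
      fun p hp => (mul_pos (ha0 _ hp.2) (hw0 _ hp.1 _ hp.2)).ne'))
  have hq_nonneg : ∀ ε ∈ Ioc (0 : ℝ) 1, 0 ≤ ∫ t in u..v, q ε t := fun ε hε => by
    have hε' := Ioc_subset_Icc_self hε
    have hle := sub_nonneg.2 (hmin ε hε)
    have hwε : ContinuousOn (w ε) (uIcc u v) :=
      (continuousOn_const.mul ha).add (continuousOn_const.mul hb)
    rw [← intervalIntegral.integral_sub
        (continuousOn_mul_add_one_div hf hwε (hw0 ε hε')).intervalIntegrable
        (continuousOn_mul_add_one_div hf ha ha0).intervalIntegrable,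
      intervalIntegral.integral_congr fun t ht =>
        add_one_div_sub_add_one_div (ha0 t ht).ne' (hw0 ε hε' t ht).ne',
      intervalIntegral.integral_const_mul] at hle
    exact nonneg_of_mul_nonneg_right hle hε.1
  have hlim := ((continuousOn_intervalIntegral_of_isCompact isCompact_Icc hq) 0
    (left_mem_Icc.2 zero_le_one)).mono_left (nhdsWithin_mono 0 Ioc_subset_Icc_self)
  rw [nhdsWithin_Ioc_eq_nhdsGT zero_lt_one] at hlim
  have := ge_of_tendsto hlim (by filter_upwards [Ioc_mem_nhdsGT (zero_lt_one' ℝ)] using hq_nonneg)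
  simpa only [q, w, sub_zero, one_mul, zero_mul, add_zero, ← sq] using this

lemma lintegral_energyDensity {w : ℝ → ℝ} (huv : u ≤ v) (hf : ContinuousOn f (Icc u v))
    (hf0 : ∀ t ∈ Icc u v, 0 ≤ f t) (hw : ContinuousOn w (Icc u v))
    (hw0 : ∀ t ∈ Icc u v, 0 < w t) :
    ∫⁻ t in Ioo u v, energyDensity (f t) (w t) =
      ENNReal.ofReal (∫ t in u..v, (f t * w t + 1 / w t)) := by
  have hcont := continuousOn_mul_add_one_div hf hw hw0
  have hfw : ∀ t ∈ Icc u v, 0 ≤ f t * w t := fun t ht => mul_nonneg (hf0 t ht) (hw0 t ht).le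
  rw [intervalIntegral.integral_of_le huv, integral_Ioc_eq_integral_Ioo,
    ofReal_integral_eq_lintegral_ofReal (hcont.integrableOn_Icc.mono_set Ioo_subset_Icc_self)]
  · refine setLIntegral_congr_fun measurableSet_Ioo fun t ht => ?_
    have ht' := Ioo_subset_Icc_self ht
    simp only [energyDensity]
    rw [ENNReal.ofReal_add (hfw t ht') (one_div_nonneg.2 (hw0 t ht').le), one_div,
      ENNReal.ofReal_inv_of_pos (hw0 t ht')]
  · filter_upwards [ae_restrict_mem measurableSet_Ioo] with t ht
    have ht' := Ioo_subset_Icc_self ht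
    exact add_nonneg (hfw t ht') (one_div_nonneg.2 (hw0 t ht').le)

lemma energy_eq_ofReal_add (hf : ContinuousOn f (Icc 0 1)) (hf0 : ∀ t ∈ Icc (0 : ℝ) 1, 0 ≤ f t)
    (hγ : γ ∈ calU) (hv : v ∈ Ioo (0 : ℝ) 1) (hpos : 0 < profile L γ v) :
    energy f L γ =
      ENNReal.ofReal (∫ t in (0 : ℝ)..v, (f t * profile L γ t + 1 / profile L γ t)) +
        ∫⁻ t in Ico v 1, energyDensity (f t) (profile L γ t) := by
  have hsub : Icc 0 v ⊆ Icc (0 : ℝ) 1 := Icc_subset_Icc_right hv.2.le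
  have hdisj : Disjoint (Ioo 0 v) (Ico v 1) :=
    disjoint_left.2 fun _ ht ht' => ht.2.not_ge ht'.1
  rw [energy, ← Ioo_union_Ico_eq_Ioo hv.1 hv.2.le, lintegral_union measurableSet_Ico hdisj,
    lintegral_energyDensity hv.1.le (hf.mono hsub) (fun t ht => hf0 t (hsub ht))
      ((continuousOn_profile hγ).mono hsub)]
  exact fun t ht => hpos.trans_le
    (antitoneOn_profile hγ (hsub ht) (Ioo_subset_Icc_self hv) ht.2)

lemma IsEnergyMin.integral_le (hf : ContinuousOn f (Icc 0 1))
    (hf0 : ∀ t ∈ Icc (0 : ℝ) 1, 0 ≤ f t) (h : IsEnergyMin f L γ) (hβ : β ∈ calU)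
    (hv : v ∈ Ioo (0 : ℝ) 1) (heq : ∀ t ∈ Icc v 1, profile M β t = profile L γ t) :
    ∫ t in (0 : ℝ)..v, (f t * profile L γ t + 1 / profile L γ t) ≤
      ∫ t in (0 : ℝ)..v, (f t * profile M β t + 1 / profile M β t) := by
  have hγv := h.profile_pos hf v (Ioo_subset_Ico_self hv)
  have hβv : 0 < profile M β v := (heq v (left_mem_Icc.2 hv.2.le)).symm ▸ hγv
  have hle := h.energy_le β hβ M
    ((heq 1 (right_mem_Icc.2 hv.2.le)).symm ▸ h.profile_one_nonneg)
  have htail : ∫⁻ t in Ico v 1, energyDensity (f t) (profile M β t) =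
      ∫⁻ t in Ico v 1, energyDensity (f t) (profile L γ t) :=
    setLIntegral_congr_fun measurableSet_Ico fun t ht => by rw [heq t (Ico_subset_Icc_self ht)]
  have hγsplit := energy_eq_ofReal_add hf hf0 h.mem_calU hv hγv
  have htop := ENNReal.add_ne_top.1 (hγsplit ▸ h.energy_ne_top hf)
  rw [hγsplit, energy_eq_ofReal_add hf hf0 hβ hv hβv, htail,
    ENNReal.add_le_add_iff_right htop.2, ENNReal.ofReal_le_ofReal_iff] at hle
  · exact hle
  · refine intervalIntegral.integral_nonneg hv.1.le fun t ht => ?_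
    have ht1 : t ∈ Icc (0 : ℝ) 1 := Icc_subset_Icc_right hv.2.le ht
    have hβt := hβv.le.trans (antitoneOn_profile hβ ht1 (Ioo_subset_Icc_self hv) ht.2)
    exact add_nonneg (mul_nonneg (hf0 t ht1) hβt) (one_div_nonneg.2 hβt)

lemma IsEnergyMin.integral_profile_sub_mul_nonneg (hf : ContinuousOn f (Icc 0 1))
    (hf0 : ∀ t ∈ Icc (0 : ℝ) 1, 0 ≤ f t) (h : IsEnergyMin f L γ) (hβ : β ∈ calU)
    (hv : v ∈ Ioo (0 : ℝ) 1) (heq : ∀ t ∈ Icc v 1, profile M β t = profile L γ t) :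
    0 ≤ ∫ t in (0 : ℝ)..v,
      (profile M β t - profile L γ t) * (f t - 1 / profile L γ t ^ 2) := by
  have hsub : Icc 0 v ⊆ Icc (0 : ℝ) 1 := Icc_subset_Icc_right hv.2.le
  have hv1 := Ioo_subset_Icc_self hv
  have hγv := h.profile_pos hf v (Ioo_subset_Ico_self hv)
  have hβv : 0 < profile M β v := (heq v (left_mem_Icc.2 hv.2.le)).symm ▸ hγv
  refine integral_sub_mul_sub_one_div_sq_nonneg hv.1.le (hf.mono hsub)
    ((continuousOn_profile h.mem_calU).mono hsub) ((continuousOn_profile hβ).mono hsub)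
    (fun t ht => hγv.trans_le (antitoneOn_profile h.mem_calU (hsub ht) hv1 ht.2))
    (fun t ht => hβv.trans_le (antitoneOn_profile hβ (hsub ht) hv1 ht.2)) fun ε hε => ?_
  have hprofile := fun t ht => profile_linearCombination (L := L) (M := M) h.mem_calU hβ (1 - ε) ε
    (t := t) ht
  refine (h.integral_le (M := (1 - ε) * L + ε * M) hf hf0
    (convex_calU h.mem_calU hβ (sub_nonneg.2 hε.2) hε.1.le (sub_add_cancel 1 ε))
    hv fun t ht => ?_).trans_eq (intervalIntegral.integral_congr fun t ht => ?_)
  · rw [hprofile t ⟨hv.1.le.trans ht.1, ht.2⟩, heq t ht, ← add_mul, sub_add_cancel, one_mul]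
  · rw [uIcc_of_le hv.1.le] at ht
    simp only [hprofile t (hsub ht)]

/-- The function `G(s) = ∫₀ˢ (f - Γ⁻²)`: the density, with respect to a change of the order
parameter, of the first variation of the energy when the profile is kept fixed near `1`. -/
def gap (f : ℝ → ℝ) (L : ℝ) (γ : ℝ → ℝ) (s : ℝ) : ℝ :=
  (∫ x in (0 : ℝ)..s, f x) - invSqIntegral L γ s

lemma hasDerivAt_integral_of_continuousOn {s : ℝ} (hf : ContinuousOn f (Icc u v))
    (hs : s ∈ Ioo u v) : HasDerivAt (fun s => ∫ x in u..s, f x) (f s) s :=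
  intervalIntegral.integral_hasDerivAt_right
    ((hf.mono (Icc_subset_Icc_right hs.2.le)).intervalIntegrable_of_Icc hs.1.le)
    (hf.stronglyMeasurableAtFilter_nhdsWithin measurableSet_Icc s |>.filter_mono (by
      rw [nhdsWithin_eq_nhds.2 (Icc_mem_nhds hs.1 hs.2)]))
    (hf.continuousAt (Icc_mem_nhds hs.1 hs.2))

lemma gap_zero : gap f L γ 0 = 0 := by simp [gap, invSqIntegral]

lemma hasDerivAt_gap {s : ℝ} (hf : ContinuousOn f (Icc 0 1)) (hγ : γ ∈ calU)
    (hpos : ∀ t ∈ Ico (0 : ℝ) 1, 0 < profile L γ t) (hs : s ∈ Ioo (0 : ℝ) 1) :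
    HasDerivAt (gap f L γ) (f s - 1 / profile L γ s ^ 2) s :=
  (hasDerivAt_integral_of_continuousOn hf hs).sub (hasDerivAt_invSqIntegral hγ hpos hs)

lemma continuousOn_gap (hf : ContinuousOn f (Icc 0 1)) (hγ : γ ∈ calU)
    (hpos : ∀ t ∈ Ico (0 : ℝ) 1, 0 < profile L γ t) (hv : v ∈ Ico (0 : ℝ) 1) :
    ContinuousOn (gap f L γ) (Icc 0 v) := by
  have hprim : ∀ {h : ℝ → ℝ}, ContinuousOn h (Icc 0 v) →
      ContinuousOn (fun s => ∫ x in (0 : ℝ)..s, h x) (Icc 0 v) := fun hh =>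
    (uIcc_of_le hv.1) ▸ intervalIntegral.continuousOn_primitive_interval
      ((uIcc_of_le hv.1).symm ▸ hh.integrableOn_Icc)
  exact (hprim (hf.mono (Icc_subset_Icc_right hv.2.le))).sub
    (hprim ((continuousOn_one_div_profile_sq hγ hpos).mono (Icc_subset_Ico_right hv.2)))

lemma intervalIntegrable_sub_mul_gap (hf : ContinuousOn f (Icc 0 1)) (hγ : γ ∈ calU)
    (hpos : ∀ t ∈ Ico (0 : ℝ) 1, 0 < profile L γ t) (hβ : β ∈ calU) (hv : v ∈ Ico (0 : ℝ) 1) :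
    IntervalIntegrable (fun t => (β t - γ t) * gap f L γ t) volume 0 v := by
  have h0 : (0 : ℝ) ∈ Icc (0 : ℝ) 1 := left_mem_Icc.2 zero_le_one
  refine ((intervalIntegrable_of_mem_calU hβ h0 (Ico_subset_Icc_self hv)).sub
    (intervalIntegrable_of_mem_calU hγ h0 (Ico_subset_Icc_self hv))).mul_continuousOn ?_
  exact (uIcc_of_le hv.1).symm ▸ continuousOn_gap hf hγ hpos hv

lemma integral_profile_sub_mul_eq (hf : ContinuousOn f (Icc 0 1)) (hγ : γ ∈ calU)
    (hpos : ∀ t ∈ Ico (0 : ℝ) 1, 0 < profile L γ t) (hβ : β ∈ calU) (hv : v ∈ Ico (0 : ℝ) 1)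
    (heq : profile M β v = profile L γ v) :
    ∫ t in (0 : ℝ)..v, (profile M β t - profile L γ t) * (f t - 1 / profile L γ t ^ 2) =
      ∫ t in (0 : ℝ)..v, (β t - γ t) * gap f L γ t := by
  have hsub : Icc 0 v ⊆ Icc (0 : ℝ) 1 := Icc_subset_Icc_right hv.2.le
  have hΔ : ContinuousOn (fun t => profile M β t - profile L γ t) (Icc 0 v) :=
    ((continuousOn_profile hβ).sub (continuousOn_profile hγ)).mono hsub
  have hprofile_int : IntervalIntegrable (fun t => (profile M β t - profile L γ t) *
      (f t - 1 / profile L γ t ^ 2)) volume 0 v :=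
    (hΔ.mul ((hf.mono hsub).sub ((continuousOn_one_div_profile_sq hγ hpos).mono
      (Icc_subset_Ico_right hv.2)))).intervalIntegrable_of_Icc hv.1
  have hgap_int := intervalIntegrable_sub_mul_gap hf hγ hpos hβ hv
  have hparts := integral_eq_of_hasDerivAt_off_countable_of_le
    (fun t => (profile M β t - profile L γ t) * gap f L γ t)
    (fun t => (profile M β t - profile L γ t) * (f t - 1 / profile L γ t ^ 2) -
      (β t - γ t) * gap f L γ t) hv.1
    ((countable_not_hasDerivAt_profile hβ M).union (countable_not_hasDerivAt_profile hγ L))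
    (hΔ.mul (continuousOn_gap hf hγ hpos hv)) ?_ (hprofile_int.sub hgap_int)
  · rw [intervalIntegral.integral_sub hprofile_int hgap_int, heq, gap_zero, sub_self, zero_mul,
      mul_zero, sub_self] at hparts
    exact sub_eq_zero.1 hparts
  · rintro t ⟨ht, htc⟩
    have ht1 : t ∈ Ioo (0 : ℝ) 1 := ⟨ht.1, ht.2.trans hv.2⟩
    simp only [mem_union, mem_ofPred_eq, not_or, not_and, not_not] at htc
    refine (((htc.1 ht1).sub (htc.2 ht1)).mul (hasDerivAt_gap hf hγ hpos ht1)).congr_deriv ?_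
    simp only [Pi.sub_apply]
    ring

lemma IsEnergyMin.integral_sub_mul_gap_nonneg (hf : ContinuousOn f (Icc 0 1))
    (hf0 : ∀ t ∈ Icc (0 : ℝ) 1, 0 ≤ f t) (h : IsEnergyMin f L γ) (hβ : β ∈ calU)
    (hv : v ∈ Ioo (0 : ℝ) 1) (heq : ∀ t ∈ Ioo v 1, β t = γ t) :
    0 ≤ ∫ t in (0 : ℝ)..v, (β t - γ t) * gap f L γ t := by
  have hv1 := Ioo_subset_Icc_self hv
  set M := profile L γ v + ∫ x in (0 : ℝ)..v, β x
  have hMv : profile M β v = profile L γ v := by simp [profile, M]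
  rw [← integral_profile_sub_mul_eq hf h.mem_calU (h.profile_pos hf) hβ
    (Ioo_subset_Ico_self hv) hMv]
  refine h.integral_profile_sub_mul_nonneg hf hf0 hβ hv fun t ht => ?_
  have ht1 : t ∈ Icc (0 : ℝ) 1 := ⟨hv.1.le.trans ht.1, ht.2⟩
  have hint : ∫ x in v..t, β x = ∫ x in v..t, γ x := by
    rw [intervalIntegral.integral_of_le ht.1, intervalIntegral.integral_of_le ht.1,
      integral_Ioc_eq_integral_Ioo, integral_Ioc_eq_integral_Ioo]
    exact setIntegral_congr_fun measurableSet_Ioo fun x hx => heq x ⟨hx.1, hx.2.trans_le ht.2⟩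
  have hγt := profile_sub_profile (L := L) h.mem_calU hv1 ht1
  have hβt := profile_sub_profile (L := M) hβ hv1 ht1
  linarith

end Variation

section Structure

variable {f γ : ℝ → ℝ} {L a b s t u v : ℝ}

lemma ae_eq_zero_of_nonpos_of_integral_nonneg {h : ℝ → ℝ} (huv : u ≤ v)
    (hint : IntervalIntegrable h volume u v) (hle : ∀ t ∈ Ioo u v, h t ≤ 0)
    (hnonneg : 0 ≤ ∫ t in u..v, h t) : ∀ᵐ t, t ∈ Ioo u v → h t = 0 := by
  have hle' : 0 ≤ᵐ[volume.restrict (Ioo u v)] -h := by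
    filter_upwards [ae_restrict_mem measurableSet_Ioo] with t ht
    exact neg_nonneg.2 (hle t ht)
  have hzero : ∫ t in Ioo u v, (-h) t = 0 := by
    refine le_antisymm ?_ (integral_nonneg_of_ae hle')
    rw [integral_neg', ← integral_Ioc_eq_integral_Ioo, ← intervalIntegral.integral_of_le huv]
    exact neg_nonpos.2 hnonneg
  have hint' := ((intervalIntegrable_iff_integrableOn_Ioo_of_le huv).1 hint).neg
  filter_upwards [(ae_restrict_iff' measurableSet_Ioo).1
    ((integral_eq_zero_iff_of_nonneg_ae hle' hint').1 hzero)] with t ht htm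
  exact neg_eq_zero.1 (ht htm)

/-- Raising `γ` to `γ a` on `(u, a)`, where the gap is negative, and lowering it to `γ a` on
`(a, v)`, where the gap is positive, would lower the energy unless `γ` has this value already. -/
lemma IsEnergyMin.eq_of_gap_neg_of_gap_pos (hf : ContinuousOn f (Icc 0 1))
    (hf0 : ∀ t ∈ Icc (0 : ℝ) 1, 0 ≤ f t) (h : IsEnergyMin f L γ) (hu : 0 ≤ u) (ha : a ∈ Icc u v)
    (hv : v < 1) (hneg : ∀ t ∈ Ioo u a, gap f L γ t < 0) (hpos : ∀ t ∈ Ioo a v, 0 < gap f L γ t)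
    (ht : t ∈ Ioo u v) : γ t = γ a := by
  classical
  have hγ := h.mem_calU
  have ha1 : a ∈ Ico (0 : ℝ) 1 := ⟨hu.trans ha.1, ha.2.trans_lt hv⟩
  have hv1 : v ∈ Ioo (0 : ℝ) 1 := ⟨hu.trans_lt (ht.1.trans ht.2), hv⟩
  have hsub : Ioo u v ⊆ Ico (0 : ℝ) 1 := fun t ht => ⟨hu.trans ht.1.le, ht.2.trans hv⟩
  set β := (Ioc u v).piecewise (fun _ => γ a) γ
  have hβ : β ∈ calU := piecewise_const_mem_calU hγ ha1 ha.1 ha.2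
  have hin : ∀ t ∈ Ioo u v, β t = γ a := fun t ht =>
    piecewise_eq_of_mem _ _ _ (Ioo_subset_Ioc_self ht)
  have hout : ∀ t ∉ Ioc u v, β t = γ t := fun t ht => piecewise_eq_of_notMem _ _ _ ht
  have hle : ∀ t ∈ Ioo 0 v, (β t - γ t) * gap f L γ t ≤ 0 := fun t ht => by
    by_cases htu : u < t
    · rw [hin t ⟨htu, ht.2⟩]
      rcases lt_trichotomy t a with hta | rfl | hta
      · exact mul_nonpos_of_nonneg_of_nonpos
          (sub_nonneg.2 (hγ.2.1 (hsub ⟨htu, ht.2⟩) ha1 hta.le)) (hneg t ⟨htu, hta⟩).le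
      · rw [sub_self, zero_mul]
      · exact mul_nonpos_of_nonpos_of_nonneg
          (sub_nonpos.2 (hγ.2.1 ha1 (hsub ⟨htu, ht.2⟩) hta.le)) (hpos t ⟨hta, ht.2⟩).le
    · rw [hout t fun h => htu h.1, sub_self, zero_mul]
  have hzero := ae_eq_zero_of_nonpos_of_integral_nonneg hv1.1.le
    (intervalIntegrable_sub_mul_gap hf hγ (h.profile_pos hf) hβ (Ioo_subset_Ico_self hv1)) hle
    (h.integral_sub_mul_gap_nonneg hf hf0 hβ hv1 fun t ht => hout t fun h => h.2.not_gt ht.1)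
  refine eq_of_ae_eq_of_monotoneOn_Ioo (hγ.2.1.mono hsub) ?_ ht
  filter_upwards [hzero, Measure.ae_ne volume a] with t ht hta htm
  have hgap : gap f L γ t ≠ 0 := hta.lt_or_gt.elim (fun h => (hneg t ⟨htm.1, h⟩).ne)
    fun h => (hpos t ⟨h, htm.2⟩).ne'
  have := (mul_eq_zero.1 (ht ⟨hu.trans_lt htm.1, htm.2⟩)).resolve_right hgap
  rw [hin t htm] at this
  exact (sub_eq_zero.1 this).symm

/-- A function with the sign of `gap f L γ` which, unlike `gap f L γ`, is concave as soon as
`s / ∫₀ˢ f` is convex. -/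
def ratioGap (f : ℝ → ℝ) (L : ℝ) (γ : ℝ → ℝ) (s : ℝ) : ℝ :=
  s / invSqIntegral L γ s - s / ∫ x in (0 : ℝ)..s, f x

lemma sign_ratioGap (hs : 0 < s) (hF : 0 < ∫ x in (0 : ℝ)..s, f x)
    (hR : 0 < invSqIntegral L γ s) :
    SignType.sign (ratioGap f L γ s) = SignType.sign (gap f L γ s) := by
  have heq : ratioGap f L γ s =
      s / (invSqIntegral L γ s * ∫ x in (0 : ℝ)..s, f x) * gap f L γ s := by
    rw [ratioGap, gap]
    field_simp
  rw [heq, sign_mul, sign_pos (div_pos hs (mul_pos hR hF)), one_mul]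

lemma concaveOn_ratioGap (hγ : γ ∈ calU) (hpos : ∀ t ∈ Ico (0 : ℝ) 1, 0 < profile L γ t)
    (hconv : ConvexOn ℝ (Ioo (0 : ℝ) 1) fun s => s / ∫ x in (0 : ℝ)..s, f x) :
    ConcaveOn ℝ (Ioo 0 1) (ratioGap f L γ) :=
  (concaveOn_div_invSqIntegral hγ hpos).sub hconv

lemma IsEnergyMin.sign_ratioGap (hf : ContinuousOn f (Icc 0 1)) (h : IsEnergyMin f L γ)
    (hF : ∀ s ∈ Ioo (0 : ℝ) 1, 0 < ∫ x in (0 : ℝ)..s, f x) (hs : s ∈ Ioo (0 : ℝ) 1) :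
    SignType.sign (ratioGap f L γ s) = SignType.sign (gap f L γ s) :=
  _root_.sign_ratioGap hs.1 (hF s hs) (invSqIntegral_pos h.mem_calU (h.profile_pos hf) hs)

lemma IsEnergyMin.eq_of_ratioGap_nonneg (hf : ContinuousOn f (Icc 0 1))
    (hf0 : ∀ t ∈ Icc (0 : ℝ) 1, 0 ≤ f t) (hF : ∀ s ∈ Ioo (0 : ℝ) 1, 0 < ∫ x in (0 : ℝ)..s, f x)
    (hconv : ConvexOn ℝ (Ioo (0 : ℝ) 1) fun s => s / ∫ x in (0 : ℝ)..s, f x)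
    (h : IsEnergyMin f L γ) (hv : v ∈ Ioo (0 : ℝ) 1) (hnonneg : 0 ≤ ratioGap f L γ v)
    (hs : s ∈ Ioo 0 v) (ht : t ∈ Ioo 0 v) : γ s = γ t := by
  have hγ := h.mem_calU
  have hpos := h.profile_pos hf
  have hconc := concaveOn_ratioGap hγ hpos hconv
  obtain ⟨a, ha, hneg, hnn⟩ := exists_forall_neg_forall_nonneg_of_concaveOn hconc hv hnonneg
  have hsub : Ioo a v ⊆ Ioo 0 1 := Ioo_subset_Ioo ha.1 hv.2.le
  by_cases hz : ∃ y ∈ Ioo a v, ratioGap f L γ y = 0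
  · obtain ⟨y, hy, hy0⟩ := hz
    have hzero : EqOn (fun s => s / ∫ x in (0 : ℝ)..s, f x)
        (fun s => s / invSqIntegral L γ s) (Ioo a v) := fun x hx =>
      (sub_eq_zero.1 (eq_zero_of_concaveOn_of_nonneg
        (hconc.subset hsub (convex_Ioo a v)) hnn hy hy0 hx)).symm
    exact eq_of_convexOn_div_invSqIntegral hγ hpos ha.1 (hy.1.trans hy.2) hv.2.le
      ((hconv.subset hsub (convex_Ioo a v)).congr hzero) hs ht
  · have hgap_neg : ∀ x ∈ Ioo 0 a, gap f L γ x < 0 := fun x hx => by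
      rw [← sign_eq_neg_one_iff, ← h.sign_ratioGap hf hF ⟨hx.1, (hx.2.trans_le ha.2).trans hv.2⟩]
      exact sign_neg (hneg x hx)
    have hgap_pos : ∀ x ∈ Ioo a v, 0 < gap f L γ x := fun x hx => by
      rw [← sign_eq_one_iff, ← h.sign_ratioGap hf hF (hsub hx)]
      exact sign_pos ((hnn x hx).lt_of_ne' fun h0 => hz ⟨x, hx, h0⟩)
    have heq := fun {x} => h.eq_of_gap_neg_of_gap_pos hf hf0 le_rfl ha hv.2 hgap_neg hgap_pos
      (t := x)
    exact (heq hs).trans (heq ht).symm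

lemma IsEnergyMin.eq_of_ratioGap_neg (hf : ContinuousOn f (Icc 0 1))
    (hf0 : ∀ t ∈ Icc (0 : ℝ) 1, 0 ≤ f t) (hF : ∀ s ∈ Ioo (0 : ℝ) 1, 0 < ∫ x in (0 : ℝ)..s, f x)
    (h : IsEnergyMin f L γ) (hb : 0 ≤ b) (hneg : ∀ x ∈ Ioo b 1, ratioGap f L γ x < 0)
    (hs : s ∈ Ioo b 1) (ht : t ∈ Ioo b 1) : γ s = γ t := by
  obtain ⟨v, hv, hv1⟩ := exists_between (max_lt hs.2 ht.2)
  have hsv : s ∈ Ioo b v := ⟨hs.1, (le_max_left s t).trans_lt hv⟩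
  have htv : t ∈ Ioo b v := ⟨ht.1, (le_max_right s t).trans_lt hv⟩
  have hgap_neg : ∀ x ∈ Ioo b v, gap f L γ x < 0 := fun x hx => by
    have hx1 : x ∈ Ioo b 1 := ⟨hx.1, hx.2.trans hv1⟩
    rw [← sign_eq_neg_one_iff, ← h.sign_ratioGap hf hF ⟨hb.trans_lt hx.1, hx1.2⟩]
    exact sign_neg (hneg x hx1)
  have heq := fun {x} => h.eq_of_gap_neg_of_gap_pos hf hf0 hb
    (right_mem_Icc.2 (hsv.1.trans hsv.2).le) hv1 hgap_neg
    (fun x hx => absurd (hx.1.trans hx.2) (lt_irrefl v)) (t := x)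
  exact (heq hsv).trans (heq htv).symm

lemma exists_isLUB_insert_zero {S : Set ℝ} (hS : S ⊆ Ioo 0 1) :
    ∃ b ∈ Icc (0 : ℝ) 1, IsLUB (insert 0 S) b := by
  have hle : ∀ x ∈ insert 0 S, x ≤ 1 := by
    rintro x (rfl | hx)
    · exact zero_le_one
    · exact (hS hx).2.le
  have hlub := isLUB_csSup (insert_nonempty 0 S) ⟨1, hle⟩
  exact ⟨_, ⟨hlub.1 (mem_insert 0 S), hlub.2 hle⟩, hlub⟩

lemma IsEnergyMin.exists_eq_on_Ioo (hf : ContinuousOn f (Icc 0 1))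
    (hf0 : ∀ t ∈ Icc (0 : ℝ) 1, 0 ≤ f t) (hF : ∀ s ∈ Ioo (0 : ℝ) 1, 0 < ∫ x in (0 : ℝ)..s, f x)
    (hconv : ConvexOn ℝ (Ioo (0 : ℝ) 1) fun s => s / ∫ x in (0 : ℝ)..s, f x)
    (h : IsEnergyMin f L γ) :
    ∃ b ∈ Ico (0 : ℝ) 1, (∀ s ∈ Ioo 0 b, ∀ t ∈ Ioo 0 b, γ s = γ t) ∧
      ∀ s ∈ Ioo b 1, ∀ t ∈ Ioo b 1, γ s = γ t := by
  obtain ⟨b, hb, hlub⟩ := exists_isLUB_insert_zero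
    (sep_subset (Ioo 0 1) fun s => 0 ≤ ratioGap f L γ s)
  have hlow : ∀ s ∈ Ioo 0 b, ∀ t ∈ Ioo 0 b, γ s = γ t := fun s hs t ht => by
    obtain ⟨v, rfl | ⟨hv, hnonneg⟩, hlt, -⟩ := hlub.exists_between (max_lt hs.2 ht.2)
    · exact absurd (hs.1.trans_le (le_max_left s t)) hlt.not_gt
    · exact h.eq_of_ratioGap_nonneg hf hf0 hF hconv hv hnonneg
        ⟨hs.1, (le_max_left s t).trans_lt hlt⟩ ⟨ht.1, (le_max_right s t).trans_lt hlt⟩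
  rcases hb.2.lt_or_eq with hb1 | rfl
  · have hneg : ∀ x ∈ Ioo b 1, ratioGap f L γ x < 0 := fun x hx => not_le.1 fun hnonneg =>
      hx.1.not_ge (hlub.1 (Or.inr ⟨⟨hb.1.trans_lt hx.1, hx.2⟩, hnonneg⟩))
    exact ⟨b, ⟨hb.1, hb1⟩, hlow, fun s hs t ht =>
      h.eq_of_ratioGap_neg hf hf0 hF hb.1 hneg hs ht⟩
  · exact ⟨0, left_mem_Ico.2 zero_lt_one,
      fun s hs => absurd (hs.1.trans hs.2) (lt_irrefl 0), hlow⟩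

lemma ae_eq_step_of_eq_on_Ioo (hγ : γ ∈ calU) (hb : b ∈ Ico (0 : ℝ) 1)
    (hlow : ∀ s ∈ Ioo 0 b, ∀ t ∈ Ioo 0 b, γ s = γ t)
    (hhigh : ∀ s ∈ Ioo b 1, ∀ t ∈ Ioo b 1, γ s = γ t) :
    ∃ c₀ c₁ : ℝ, 0 ≤ c₀ ∧ 0 ≤ c₁ ∧ ∃ t₀ ∈ Ico (0 : ℝ) 1,
      ∀ᵐ t ∂(volume.restrict (Ico (0 : ℝ) 1)),
        γ t = c₀ + c₁ * (if t₀ ≤ t then 1 else 0) := by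
  have hp : b / 2 ∈ Ico (0 : ℝ) 1 := ⟨by linarith [hb.1], by linarith [hb.1, hb.2]⟩
  have hq : (b + 1) / 2 ∈ Ioo b 1 := ⟨by linarith [hb.2], by linarith [hb.2]⟩
  have hpq : γ (b / 2) ≤ γ ((b + 1) / 2) :=
    hγ.2.1 hp ⟨hb.1.trans hq.1.le, hq.2⟩ (by linarith)
  refine ⟨γ (b / 2), γ ((b + 1) / 2) - γ (b / 2), hγ.1 _ hp, sub_nonneg.2 hpq, b, hb, ?_⟩
  filter_upwards [ae_restrict_mem measurableSet_Ico, ae_restrict_of_ae (Measure.ae_ne volume 0),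
    ae_restrict_of_ae (Measure.ae_ne volume b)] with t ht ht0 htb
  rcases htb.lt_or_gt with h | h
  · have ht_pos := ht.1.lt_of_ne' ht0
    rw [if_neg h.not_ge, mul_zero, add_zero]
    exact hlow t ⟨ht_pos, h⟩ _ ⟨by linarith, by linarith⟩
  · rw [if_pos h.le, mul_one, add_sub_cancel]
    exact hhigh t ⟨h, ht.2⟩ _ hq

end Structure

section Mixture

variable {P : ℕ} {c : ℕ → ℝ} {x : ℝ}

lemma hasDerivAt_xiD1 (P : ℕ) (c : ℕ → ℝ) (x : ℝ) : HasDerivAt (xiD1 P c) (xiD2 P c x) x := by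
  refine HasDerivAt.fun_sum fun k hk => ?_
  have hk2 : 2 ≤ k := (Finset.mem_Icc.1 hk).1
  refine ((hasDerivAt_pow (k - 1) x).const_mul ((k : ℝ) * (c k) ^ 2)).congr_deriv ?_
  rw [Nat.cast_sub (one_le_two.trans hk2), Nat.sub_sub]
  push_cast
  ring

lemma continuous_xiD2 : Continuous (xiD2 P c) := by
  unfold xiD2
  fun_prop

lemma xiD1_zero : xiD1 P c 0 = 0 := Finset.sum_eq_zero fun k hk => by
  have hk2 : 2 ≤ k := (Finset.mem_Icc.1 hk).1
  rw [zero_pow (by omega), mul_zero]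

lemma xiD2_nonneg (hx : 0 ≤ x) : 0 ≤ xiD2 P c x := Finset.sum_nonneg fun k hk => by
  have hk1 : (1 : ℝ) ≤ k := by exact_mod_cast one_le_two.trans (Finset.mem_Icc.1 hk).1
  have := sub_nonneg.2 hk1
  positivity

lemma xiD1_pos (hc : ∃ k ∈ Finset.Icc 2 P, c k ≠ 0) (hx : 0 < x) : 0 < xiD1 P c x := by
  obtain ⟨k, hk, hck⟩ := hc
  have hk0 : (0 : ℝ) < k := by exact_mod_cast two_pos.trans_le (Finset.mem_Icc.1 hk).1
  exact Finset.sum_pos' (fun j _ => by positivity) ⟨k, hk, by positivity⟩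

lemma integral_xiD2 (P : ℕ) (c : ℕ → ℝ) (s : ℝ) :
    ∫ t in (0 : ℝ)..s, xiD2 P c t = xiD1 P c s := by
  rw [intervalIntegral.integral_eq_sub_of_hasDerivAt (fun x _ => hasDerivAt_xiD1 P c x)
    (continuous_xiD2.intervalIntegrable _ _), xiD1_zero, sub_zero]

end Mixture

theorem statement_18_general {f γ : ℝ → ℝ} (hf : ContinuousOn f (Icc 0 1))
    (hf0 : ∀ t ∈ Icc (0 : ℝ) 1, 0 ≤ f t)
    (hF : ∀ s ∈ Ioo (0 : ℝ) 1, 0 < ∫ x in (0 : ℝ)..s, f x)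
    (hconv : ConvexOn ℝ (Ioo (0 : ℝ) 1) fun s => s / ∫ x in (0 : ℝ)..s, f x)
    (hγ : γ ∈ calU) (hmin : IsMinOn (parisiFunctional f) calU γ) :
    ∃ c₀ c₁ : ℝ, 0 ≤ c₀ ∧ 0 ≤ c₁ ∧ ∃ t₀ ∈ Ico (0 : ℝ) 1,
      ∀ᵐ t ∂(volume.restrict (Ico (0 : ℝ) 1)),
        γ t = c₀ + c₁ * (if t₀ ≤ t then 1 else 0) := by
  have hF1 : 0 < ∫ x in (0 : ℝ)..1, f x :=
    (hF (1 / 2) ⟨by norm_num, by norm_num⟩).trans_le <|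
      intervalIntegral.integral_mono_interval le_rfl (by norm_num) (by norm_num)
        ((ae_restrict_iff' measurableSet_Ioc).2 (ae_of_all _ fun t ht =>
          hf0 t (Ioc_subset_Icc_self ht))) (hf.intervalIntegrable_of_Icc zero_le_one)
  obtain ⟨L, h⟩ := exists_isEnergyMin hf hf0 hF1 hγ hmin
  obtain ⟨b, hb, hlow, hhigh⟩ := h.exists_eq_on_Ioo hf hf0 hF hconv
  exact ae_eq_step_of_eq_on_Ioo hγ hb hlow hhigh

/-- sufficient condition for one-step replica symmetry breaking at zero
temperature in the spherical model: the Parisi minimizer is a.e. a single step function. -/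
theorem statement_18 (P : ℕ) (hP : 2 ≤ P) (c : ℕ → ℝ)
    (hc : ∃ k ∈ Finset.Icc 2 P, c k ≠ 0)
    (z : ℝ) (hz : 0 < z)
    (hzeq : 1 / xiD1 P c 1 = ((1 + z) / z ^ 2) * Real.log (1 + z) - 1 / z)
    (hzuniq : ∀ w : ℝ, 0 < w →
      1 / xiD1 P c 1 = ((1 + w) / w ^ 2) * Real.log (1 + w) - 1 / w → w = z)
    (hfield : xiD2 P c 0 * (1 + z) < xiD1 P c 1)
    (hconv : ConvexOn ℝ (Set.Ioo (0 : ℝ) 1) (fun s => s / xiD1 P c s))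
    (γstar : ℝ → ℝ) (hγU : γstar ∈ calU)
    (hγmin : PFunE P c γstar = ⨅ γ ∈ calU, PFunE P c γ) :
    ∃ c₀ c₁ : ℝ, 0 ≤ c₀ ∧ 0 ≤ c₁ ∧ ∃ t₀ ∈ Set.Ico (0 : ℝ) 1,
      ∀ᵐ t ∂(volume.restrict (Set.Ico (0 : ℝ) 1)),
        γstar t = c₀ + c₁ * (if t₀ ≤ t then 1 else 0) :=
  statement_18_general continuous_xiD2.continuousOn (fun _ ht => xiD2_nonneg ht.1)
    (fun s hs => (integral_xiD2 P c s).symm ▸ xiD1_pos hc hs.1)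
    (by simpa only [integral_xiD2] using hconv) hγU fun γ hγ => hγmin.trans_le (iInf₂_le γ hγ)
end
end

section
/- For every β > 0, δ, ε, t > 0 and every integer k ≥ 1 there exists c > 0 such that for every N ≥ 1 and every m ∈ ℝ^N with ‖m‖₂² ≤ N and μ_N^{⊗k}( Band_k(m,δ,ε) ) > 0, P( | TAP_{N,β,k}(m,δ,ε) − E[ TAP_{N,β,k}(m,δ,ε) ] | < t ) > 1 − e^{−cN}. -/
open MeasureTheory ProbabilityTheory Filter
open scoped ENNReal NNReal

noncomputable section

/-- The replicated TAP free energy `TAP_{N,β,k}(m,δ,ε)` of couplings `g`. -/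
def TAPk (N P : ℕ) (c : ℕ → ℝ) (k : ℕ) (β δ ε : ℝ)
    (g : (j : ℕ) → (Fin j → Fin N) → ℝ) (m : Fin N → ℝ) : ℝ :=
  Real.log (∫ σs in bandK N k m δ ε,
      Real.exp (β * ∑ i, (hamiltonian N P c g (σs i) - hamiltonian N P c g m))
      ∂(Measure.pi fun _ : Fin k => sphereUniform N)) / (k * N)

/-
All the couplings form one standard Gaussian vector `x`, and `H_N(σ)` is linear in it. Hence the TAP
free energy is a log-partition function `(kN)⁻¹ log ∫ exp ⟪a(σ), x⟫`, and since
`‖a(σ)‖ ≤ 2βk √(N ξ(1))` on the band, it is `√(A / N)`-Lipschitz in `x`, with `A = 4β² ξ(1)`.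

Concentration of a Lipschitz function `f` follows Maurey and Pisier: joining independent Gaussian
vectors `X` and `Y` by the rotation `X_s = cos(πs/2) X + sin(πs/2) Y`, whose derivative is `π/2`
times a standard Gaussian vector independent of `X_s`, Jensen's inequality gives
`E Φ(f - E f) ≤ E Φ(π/2 ⟪∇ f(X), Y⟫)` for every nonnegative convex `Φ`.

An exponential `Φ` yields the tail bound `2 exp(-bN)`. This says nothing while `2 exp(-bN) ≥ 1`, and
there one needs `p = P(|f - E f| < t)` to be bounded below uniformly in `m`. For that, take
`Φ(u) = u²`, which gives a Poincaré inequality, and apply it to the truncation `g` of `f - E f` at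
height `t`: its gradient vanishes off the event, so `Var g` is at most a constant times `p`, whereas
`Cov(f, g) ≥ t² (1 - p)`; by Cauchy-Schwarz `p` cannot be small.
-/

open scoped RealInnerProductSpace Gradient

theorem absolutelyContinuous_pi_fin {n : ℕ} {X : Fin n → Type*} [∀ i, MeasurableSpace (X i)]
    {μ ν : ∀ i, Measure (X i)} [∀ i, SigmaFinite (μ i)] [∀ i, SigmaFinite (ν i)]
    (h : ∀ i, μ i ≪ ν i) : Measure.pi μ ≪ Measure.pi ν := by
  induction n with
  | zero => rw [Measure.pi_of_empty, Measure.pi_of_empty]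
  | succ n ih =>
    have hμ := (measurePreserving_piFinSuccAbove μ 0).symm
    have hν := (measurePreserving_piFinSuccAbove ν 0).symm
    rw [← hμ.map_eq, ← hν.map_eq]
    exact ((h 0).prod (ih fun i => h _)).map hμ.measurable

theorem ofReal_comp_integral_le_lintegral {α : Type*} {mα : MeasurableSpace α} {μ : Measure α}
    [IsProbabilityMeasure μ] {Φ : ℝ → ℝ} (hΦ : ConvexOn ℝ Set.univ Φ) (hΦ0 : ∀ x, 0 ≤ Φ x)
    {g : α → ℝ} (hg : Integrable g μ) :
    ENNReal.ofReal (Φ (∫ a, g a ∂μ)) ≤ ∫⁻ a, ENNReal.ofReal (Φ (g a)) ∂μ := by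
  have hΦc : Continuous Φ := continuousOn_univ.1 (hΦ.continuousOn isOpen_univ)
  by_cases hint : Integrable (fun a => Φ (g a)) μ
  · rw [← ofReal_integral_eq_lintegral_ofReal hint (.of_forall fun a => hΦ0 _)]
    exact ENNReal.ofReal_le_ofReal <| hΦ.map_integral_le hΦc.continuousOn isClosed_univ
      (.of_forall fun _ => Set.mem_univ _) hg hint
  · have htop : ∫⁻ a, ENNReal.ofReal (Φ (g a)) ∂μ = ∞ := by
      by_contra h
      refine hint ⟨hΦc.comp_aestronglyMeasurable hg.1, ?_⟩
      rwa [hasFiniteIntegral_iff_ofReal (.of_forall fun a => hΦ0 _), lt_top_iff_ne_top]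
    exact htop ▸ le_top

theorem covariance_sq_le_variance_mul_variance {Ω : Type*} {mΩ : MeasurableSpace Ω}
    {μ : Measure Ω} [IsProbabilityMeasure μ] {X Y : Ω → ℝ} (hX : MemLp X 2 μ) (hY : MemLp Y 2 μ) :
    cov[X, Y; μ] ^ 2 ≤ Var[X; μ] * Var[Y; μ] := by
  have h := discrim_le_zero (a := Var[X; μ]) (b := 2 * cov[X, Y; μ]) (c := Var[Y; μ]) fun s => by
    have := variance_nonneg (fun ω => s * X ω + Y ω) μ
    rw [variance_fun_add (hX.const_mul s) hY, variance_const_mul, covariance_const_mul_left] at this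
    linarith
  unfold discrim at h
  linarith

/-- The truncation of `u` to the interval `[-s, s]`. For a function `u`, the gradient of
`truncate s ∘ u` lives on the event `{|u| < s}`, which is how the mass of that event enters the
Poincaré inequality. -/
def truncate (s u : ℝ) : ℝ := max (-s) (min s u)

theorem lipschitzWith_truncate_comp {α : Type*} [PseudoEMetricSpace α] {f : α → ℝ} {K : ℝ≥0}
    (hf : LipschitzWith K f) (s : ℝ) : LipschitzWith K fun x => truncate s (f x) :=
  (hf.const_min s).const_max (-s)

theorem sq_le_mul_truncate {s u : ℝ} (hs : 0 ≤ s) (hu : s ≤ |u|) : s ^ 2 ≤ u * truncate s u := by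
  rcases le_abs.1 hu with h | h
  · rw [truncate, min_eq_left h, max_eq_right (by linarith)]
    nlinarith
  · rw [truncate, min_eq_right (by linarith), max_eq_left (by linarith)]
    nlinarith

theorem mul_truncate_nonneg {s : ℝ} (hs : 0 ≤ s) (u : ℝ) : 0 ≤ u * truncate s u := by
  rcases le_total 0 u with hu | hu
  · exact mul_nonneg hu (le_max_of_le_right (le_min hs hu))
  · exact mul_nonneg_of_nonpos_of_nonpos hu
      (max_le (by linarith) ((min_le_right _ _).trans hu))

theorem mul_measureReal_le_covariance_truncate {Ω : Type*} {mΩ : MeasurableSpace Ω}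
    {μ : Measure Ω} [IsProbabilityMeasure μ] {X : Ω → ℝ} (hX : MemLp X 2 μ) {s : ℝ} (hs : 0 ≤ s) :
    s ^ 2 * μ.real {ω | s ≤ |X ω - μ[X]|} ≤ cov[X, fun ω => truncate s (X ω - μ[X]); μ] := by
  set Y : Ω → ℝ := fun ω => X ω - μ[X]
  set g : Ω → ℝ := fun ω => truncate s (Y ω)
  have hY : MemLp Y 2 μ := hX.sub (memLp_const _)
  have hg : MemLp g 2 μ :=
    .of_bound ((lipschitzWith_truncate_comp .id s).continuous.comp_aestronglyMeasurable hY.1) s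
      (.of_forall fun ω => abs_le.2 ⟨le_max_left _ _, max_le (by linarith) (min_le_left _ _)⟩)
  have hY0 : μ[Y] = 0 := by
    simp [Y, integral_sub (hX.integrable one_le_two) (integrable_const _)]
  have hcov : cov[X, g; μ] = ∫ ω, Y ω * g ω ∂μ := by
    rw [← covariance_sub_const_left (hX.integrable one_le_two) μ[X], covariance_eq_sub hY hg, hY0,
      zero_mul, sub_zero]
    rfl
  have hsub : {ω | s ≤ |Y ω|} ⊆ {ω | s ^ 2 ≤ Y ω * g ω} := fun ω hω => sq_le_mul_truncate hs hω
  calc s ^ 2 * μ.real {ω | s ≤ |Y ω|} ≤ s ^ 2 * μ.real {ω | s ^ 2 ≤ Y ω * g ω} :=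
      mul_le_mul_of_nonneg_left (measureReal_mono hsub) (sq_nonneg s)
    _ ≤ ∫ ω, Y ω * g ω ∂μ :=
      mul_meas_ge_le_integral_of_nonneg (.of_forall fun ω => mul_truncate_nonneg hs _)
        (hY.integrable_mul hg) _
    _ = cov[X, g; μ] := hcov.symm

theorem exists_forall_min_two_mul_exp_lt_exp {b q : ℝ} (hb : 0 < b) (hq : 0 < q) :
    ∃ c > 0, ∀ x ≥ 0, min (2 * Real.exp (-b * x)) (1 - q) < Real.exp (-c * x) := by
  have : 0 < Real.log 2 := Real.log_pos one_lt_two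
  refine ⟨min (b / 2) (q * b / (4 * Real.log 2)), by positivity, fun x hx => ?_⟩
  set c := min (b / 2) (q * b / (4 * Real.log 2))
  rcases lt_or_ge (2 * Real.log 2) (b * x) with hlarge | hsmall
  · have hc : c * x ≤ b / 2 * x := mul_le_mul_of_nonneg_right (min_le_left _ _) hx
    calc
      _ ≤ 2 * Real.exp (-b * x) := min_le_left _ _
      _ = Real.exp (Real.log 2 - b * x) := by
        rw [sub_eq_add_neg, Real.exp_add, Real.exp_log two_pos, neg_mul]
      _ < Real.exp (-c * x) := Real.exp_lt_exp.2 (by linarith)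
  · have hc : c * x ≤ q / 2 := by
      calc c * x ≤ q * b / (4 * Real.log 2) * x :=
            mul_le_mul_of_nonneg_right (min_le_right _ _) hx
        _ = q * (b * x) / (4 * Real.log 2) := by ring
        _ ≤ q * (2 * Real.log 2) / (4 * Real.log 2) := by gcongr
        _ = q / 2 := by field_simp; norm_num
    calc
      _ ≤ 1 - q := min_le_right _ _
      _ < -c * x + 1 := by linarith
      _ ≤ Real.exp (-c * x) := Real.add_one_le_exp _

section QuarterTurn

variable {E : Type*} [NormedAddCommGroup E] [NormedSpace ℝ E]

/-- The rotation of `E × E` by the angle `π s / 2`: for `s ∈ [0, 1]` the first component of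
`quarterTurn s (x, y)` runs from `x` to `y` along a quarter of an ellipse. -/
def quarterTurn (s : ℝ) : E × E →L[ℝ] E × E :=
  ContinuousLinearMap.rotation (Real.pi / 2 * s)

theorem quarterTurn_apply (s : ℝ) (p : E × E) :
    quarterTurn s p =
      (Real.cos (Real.pi / 2 * s) • p.1 + Real.sin (Real.pi / 2 * s) • p.2,
        -Real.sin (Real.pi / 2 * s) • p.1 + Real.cos (Real.pi / 2 * s) • p.2) := rfl

theorem contDiff_quarterTurn {n : WithTop ℕ∞} :
    ContDiff ℝ n fun q : (E × E) × ℝ => quarterTurn q.2 q.1 := by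
  simp only [quarterTurn_apply]
  fun_prop

theorem hasDerivAt_quarterTurn_fst (p : E × E) (s : ℝ) :
    HasDerivAt (fun s => (quarterTurn s p).1) ((Real.pi / 2) • (quarterTurn s p).2) s := by
  have hlin : HasDerivAt (fun s => Real.pi / 2 * s) (Real.pi / 2) s := by
    simpa using (hasDerivAt_id s).const_mul (Real.pi / 2)
  convert! (hlin.cos.smul_const p.1).add (hlin.sin.smul_const p.2) using 1
  simp only [quarterTurn_apply, smul_add, smul_smul]
  congr 2 <;> ring

theorem integral_deriv_comp_quarterTurn {f : E → ℝ} {K : ℝ≥0} (hf : LipschitzWith K f)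
    (p : E × E) :
    ∫ s in 0..1, deriv (fun s => f (quarterTurn s p).1) s = f p.2 - f p.1 := by
  have hpath : ContDiff ℝ 1 (fun s => (quarterTurn s p).1) :=
    (contDiff_quarterTurn.comp (contDiff_prodMk_right p)).fst
  obtain ⟨L, hL⟩ := hpath.contDiffOn.exists_lipschitzOnWith one_ne_zero (convex_uIcc 0 1)
    isCompact_uIcc
  have hac := (hf.comp_lipschitzOnWith hL).absolutelyContinuousOnInterval
  simpa [Function.comp_def, quarterTurn_apply] using hac.integral_deriv_eq_sub

end QuarterTurn

section Gradient

variable {E : Type*} [NormedAddCommGroup E] [InnerProductSpace ℝ E] [CompleteSpace E]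

theorem norm_gradient_le_of_lipschitz {f : E → ℝ} {K : ℝ≥0} (hf : LipschitzWith K f) (x : E) :
    ‖∇ f x‖ ≤ K := by
  simpa [gradient] using norm_fderiv_le_of_lipschitz ℝ hf

theorem measurable_gradient [MeasurableSpace E] [BorelSpace E] (f : E → ℝ) : Measurable (∇ f) :=
  (InnerProductSpace.toDual ℝ E).symm.continuous.measurable.comp (measurable_fderiv ℝ f)

theorem gradient_truncate_comp_eq_zero {u : E → ℝ} {s : ℝ} (hs : 0 ≤ s) {x : E}
    (hx : s ≤ |u x|) : ∇ (fun y => truncate s (u y)) x = 0 := by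
  have hext : IsLocalExtr (fun y => truncate s (u y)) x := by
    rcases le_abs.1 hx with h | h
    · refine .inr (.of_forall fun y => ?_)
      simp only [truncate, min_eq_left h, max_eq_right (by linarith : -s ≤ s)]
      exact max_le (by linarith) (min_le_left _ _)
    · refine .inl (.of_forall fun y => ?_)
      simp only [truncate, max_eq_left ((min_le_right _ _).trans (le_neg_of_le_neg h))]
      exact le_max_left _ _
  simp [gradient, hext.fderiv_eq_zero]

end Gradient

/-! ### Gaussian concentration of Lipschitz functions -/

section MaureyPisier

variable {E : Type*} [NormedAddCommGroup E] [InnerProductSpace ℝ E] [FiniteDimensional ℝ E]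
  [MeasurableSpace E] [BorelSpace E] {f : E → ℝ} {K : ℝ≥0}

local notation "γ" => stdGaussian E

variable (E) in
theorem stdGaussian_absolutelyContinuous_volume : stdGaussian E ≪ volume := by
  set b := stdOrthonormalBasis ℝ E
  have hpi : (Measure.pi fun _ : Fin (Module.finrank ℝ E) => gaussianReal 0 1) ≪ volume :=
    absolutelyContinuous_pi_fin fun _ => gaussianReal_absolutelyContinuous 0 one_ne_zero
  have hb : MeasurePreserving fun x : Fin (Module.finrank ℝ E) → ℝ => ∑ i, x i • b i := by
    refine (b.measurePreserving_repr_symm.comp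
      (EuclideanSpace.volume_preserving_symm_measurableEquiv_toLp _).symm).congr (by fun_prop)
      (.of_forall fun x => ?_)
    exact (b.sum_repr_symm (WithLp.toLp 2 x)).symm
  exact (hpi.map hb.measurable).trans hb.map_eq.absolutelyContinuous

theorem ae_stdGaussian_differentiableAt (hf : LipschitzWith K f) :
    ∀ᵐ x ∂γ, DifferentiableAt ℝ f x :=
  (stdGaussian_absolutelyContinuous_volume E).ae_le hf.ae_differentiableAt

theorem measurePreserving_quarterTurn (s : ℝ) :
    MeasurePreserving (quarterTurn s) (Measure.prod γ γ) (Measure.prod γ γ) where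
  measurable := (quarterTurn s).continuous.measurable
  map_eq := IsGaussian.map_rotation_eq_self integral_id_stdGaussian _

theorem ae_differentiableAt_quarterTurn (hf : LipschitzWith K f) :
    ∀ᵐ p ∂Measure.prod γ γ, ∀ᵐ s : ℝ,
      DifferentiableAt ℝ f (quarterTurn s p).1 := by
  have hmeas : MeasurableSet {q : (E × E) × ℝ | DifferentiableAt ℝ f (quarterTurn q.2 q.1).1} :=
    (contDiff_quarterTurn (n := 0)).continuous.fst.measurable
      (measurableSet_of_differentiableAt ℝ f)
  refine (Measure.ae_ae_comm (p := fun p s => DifferentiableAt ℝ f (quarterTurn s p).1) hmeas).2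
    (.of_forall fun s => ?_)
  exact (measurePreserving_quarterTurn s).quasiMeasurePreserving.ae
    (Measure.quasiMeasurePreserving_fst.ae (ae_stdGaussian_differentiableAt hf))

theorem ae_sub_eq_integral_inner_gradient (hf : LipschitzWith K f) :
    ∀ᵐ p ∂Measure.prod γ γ, f p.2 - f p.1 =
      ∫ s in Set.Ioc (0 : ℝ) 1,
        Real.pi / 2 * ⟪∇ f (quarterTurn s p).1, (quarterTurn s p).2⟫ := by
  filter_upwards [ae_differentiableAt_quarterTurn hf] with p hp
  rw [← integral_deriv_comp_quarterTurn hf p, intervalIntegral.integral_of_le zero_le_one]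
  refine integral_congr_ae (ae_restrict_of_ae ?_)
  filter_upwards [hp] with s hs
  have hder := (hs.hasFDerivAt.comp_hasDerivAt s (hasDerivAt_quarterTurn_fst p s)).deriv
  simpa [Function.comp_def] using hder

theorem integrableOn_inner_gradient_quarterTurn (hf : LipschitzWith K f) (p : E × E) :
    IntegrableOn (fun s => Real.pi / 2 * ⟪∇ f (quarterTurn s p).1, (quarterTurn s p).2⟫)
      (Set.Ioc 0 1) := by
  have hcont : Continuous fun s : ℝ => quarterTurn s p :=
    (contDiff_quarterTurn.comp (contDiff_prodMk_right (n := 0) p)).continuous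
  have hbound : IntegrableOn (fun s => ‖(quarterTurn s p).2‖) (Set.Ioc 0 1) :=
    hcont.snd.norm.integrableOn_Ioc
  have hgrad : Measurable fun s => ∇ f (quarterTurn s p).1 :=
    (measurable_gradient f).comp hcont.fst.measurable
  have hmeas : Measurable fun s : ℝ => ⟪∇ f (quarterTurn s p).1, (quarterTurn s p).2⟫ :=
    hgrad.inner hcont.snd.measurable
  refine ((hbound.const_mul (K : ℝ)).mono' hmeas.aestronglyMeasurable
    (.of_forall fun s => ?_)).const_mul _
  exact (norm_inner_le_norm _ _).trans
    (mul_le_mul_of_nonneg_right (norm_gradient_le_of_lipschitz hf _) (norm_nonneg _))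

theorem lintegral_comp_sub_le_lintegral_comp_inner_gradient (hf : LipschitzWith K f) {Φ : ℝ → ℝ}
    (hΦ : ConvexOn ℝ Set.univ Φ) (hΦ0 : ∀ x, 0 ≤ Φ x) :
    ∫⁻ p, ENNReal.ofReal (Φ (f p.2 - f p.1)) ∂Measure.prod γ γ ≤
      ∫⁻ p, ENNReal.ofReal (Φ (Real.pi / 2 * ⟪∇ f p.1, p.2⟫))
        ∂Measure.prod γ γ := by
  have : IsProbabilityMeasure (volume.restrict (Set.Ioc (0 : ℝ) 1)) := ⟨by simp⟩
  have hΦm : Measurable Φ := (continuousOn_univ.1 (hΦ.continuousOn isOpen_univ)).measurable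
  set u : E × E → ℝ≥0∞ := fun p => ENNReal.ofReal (Φ (Real.pi / 2 * ⟪∇ f p.1, p.2⟫))
  have hu : Measurable u := (hΦm.comp (((measurable_gradient f).comp
    measurable_fst).inner measurable_snd |>.const_mul _)).ennreal_ofReal
  calc
    _ ≤ ∫⁻ p, (∫⁻ s in Set.Ioc (0 : ℝ) 1, u (quarterTurn s p)) ∂Measure.prod γ γ := by
      refine lintegral_mono_ae ?_
      filter_upwards [ae_sub_eq_integral_inner_gradient hf] with p hp
      rw [hp]
      exact ofReal_comp_integral_le_lintegral hΦ hΦ0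
        (integrableOn_inner_gradient_quarterTurn hf p)
    _ = ∫⁻ s in Set.Ioc (0 : ℝ) 1, ∫⁻ p, u (quarterTurn s p) ∂Measure.prod γ γ :=
      lintegral_lintegral_swap (f := fun p s => u (quarterTurn s p))
        (hu.comp (contDiff_quarterTurn (n := 0)).continuous.measurable).aemeasurable
    _ = ∫⁻ p, u p ∂Measure.prod γ γ := by
      simp [(measurePreserving_quarterTurn _).lintegral_comp hu]

theorem memLp_stdGaussian_of_lipschitz (hf : LipschitzWith K f) {p : ℝ≥0∞} (hp : p ≠ ∞) :
    MemLp f p γ := by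
  have hid : MemLp id p γ := IsGaussian.memLp_id _ p hp
  have hsub : MemLp (fun x => f x - f 0) p γ :=
    hid.of_le_mul (c := K) (hf.continuous.sub continuous_const).aestronglyMeasurable
      (.of_forall fun x => by simpa using hf.norm_sub_le x 0)
  simpa [Pi.add_def] using hsub.add (memLp_const (f 0))

theorem lintegral_comp_sub_integral_le (hf : LipschitzWith K f) {Φ : ℝ → ℝ}
    (hΦ : ConvexOn ℝ Set.univ Φ) (hΦ0 : ∀ x, 0 ≤ Φ x) :
    ∫⁻ x, ENNReal.ofReal (Φ (f x - ∫ y, f y ∂γ)) ∂γ ≤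
      ∫⁻ x, ∫⁻ y, ENNReal.ofReal (Φ (Real.pi / 2 * ⟪∇ f x, y⟫)) ∂γ ∂γ := by
  have hΦm : Measurable Φ := (continuousOn_univ.1 (hΦ.continuousOn isOpen_univ)).measurable
  have hfm : Measurable f := hf.continuous.measurable
  have hfi : Integrable f γ := memLp_one_iff_integrable.1
    (memLp_stdGaussian_of_lipschitz hf ENNReal.one_ne_top)
  have hgm : Measurable (∇ f) := measurable_gradient f
  calc
    _ ≤ ∫⁻ x, ∫⁻ y, ENNReal.ofReal (Φ (f x - f y)) ∂γ ∂γ := by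
      refine lintegral_mono fun x => ?_
      simpa [integral_sub (integrable_const (f x)) hfi] using
        ofReal_comp_integral_le_lintegral hΦ hΦ0 ((integrable_const (f x)).sub hfi)
    _ = ∫⁻ p, ENNReal.ofReal (Φ (f p.2 - f p.1)) ∂Measure.prod γ γ :=
      (lintegral_prod_symm (fun p => ENNReal.ofReal (Φ (f p.2 - f p.1))) (by fun_prop)).symm
    _ ≤ _ := lintegral_comp_sub_le_lintegral_comp_inner_gradient hf hΦ hΦ0
    _ = _ := lintegral_prod _ (by fun_prop)

theorem map_inner_stdGaussian (v : E) :
    Measure.map (fun y => ⟪v, y⟫) γ = gaussianReal 0 (‖v‖₊ ^ 2) := by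
  have h := IsGaussian.map_eq_gaussianReal (μ := γ) (innerSL ℝ v)
  rw [integral_strongDual_stdGaussian, variance_dual_stdGaussian, innerSL_apply_norm] at h
  rw [show ‖v‖₊ ^ 2 = (‖v‖ ^ 2).toNNReal by simp [Real.toNNReal_pow]]
  exact h

theorem lintegral_exp_inner_stdGaussian (v : E) :
    ∫⁻ y, ENNReal.ofReal (Real.exp ⟪v, y⟫) ∂γ = ENNReal.ofReal (Real.exp (‖v‖ ^ 2 / 2)) := by
  have hint : Integrable Real.exp (gaussianReal 0 (‖v‖₊ ^ 2)) := by
    simpa using integrable_exp_mul_gaussianReal (μ := 0) (v := ‖v‖₊ ^ 2) 1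
  have hmgf : ∫ u, Real.exp u ∂gaussianReal 0 (‖v‖₊ ^ 2) = Real.exp (‖v‖ ^ 2 / 2) := by
    have h := congrFun (mgf_id_gaussianReal (μ := 0) (v := ‖v‖₊ ^ 2)) 1
    simpa [mgf, NNReal.coe_pow] using h
  rw [← lintegral_map (f := fun u => ENNReal.ofReal (Real.exp u)) (by fun_prop) (by fun_prop),
    map_inner_stdGaussian, ← ofReal_integral_eq_lintegral_ofReal hint
    (.of_forall fun u => (Real.exp_pos u).le), hmgf]

theorem lintegral_inner_sq_stdGaussian (v : E) :
    ∫⁻ y, ENNReal.ofReal (⟪v, y⟫ ^ 2) ∂γ = ENNReal.ofReal (‖v‖ ^ 2) := by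
  have h := evariance_eq_lintegral_ofReal (id : ℝ → ℝ) (gaussianReal 0 (‖v‖₊ ^ 2))
  rw [← ofReal_variance (memLp_id_gaussianReal 2), variance_id_gaussianReal] at h
  rw [← lintegral_map (f := fun u => ENNReal.ofReal (u ^ 2)) (by fun_prop) (by fun_prop),
    map_inner_stdGaussian]
  simpa using h.symm

theorem lintegral_exp_mul_sub_integral_le (hf : LipschitzWith K f) (l : ℝ) :
    ∫⁻ x, ENNReal.ofReal (Real.exp (l * (f x - ∫ y, f y ∂γ))) ∂γ ≤
      ENNReal.ofReal (Real.exp ((Real.pi / 2 * K) ^ 2 * l ^ 2 / 2)) := by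
  have hconv : ConvexOn ℝ Set.univ fun u => Real.exp (l * u) :=
    convexOn_exp.comp_linearMap (LinearMap.mulLeft ℝ l)
  have hnorm (x : E) : ‖(l * (Real.pi / 2)) • ∇ f x‖ ^ 2 ≤ (Real.pi / 2 * K) ^ 2 * l ^ 2 := by
    rw [norm_smul, mul_pow, Real.norm_eq_abs, sq_abs]
    calc (l * (Real.pi / 2)) ^ 2 * ‖∇ f x‖ ^ 2 ≤ (l * (Real.pi / 2)) ^ 2 * K ^ 2 := by
          gcongr
          exact norm_gradient_le_of_lipschitz hf x
      _ = (Real.pi / 2 * K) ^ 2 * l ^ 2 := by ring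
  calc
    _ ≤ ∫⁻ x, ∫⁻ y, ENNReal.ofReal (Real.exp (l * (Real.pi / 2 * ⟪∇ f x, y⟫))) ∂γ ∂γ :=
      lintegral_comp_sub_integral_le hf hconv fun u => (Real.exp_pos _).le
    _ = ∫⁻ x, ENNReal.ofReal (Real.exp (‖(l * (Real.pi / 2)) • ∇ f x‖ ^ 2 / 2)) ∂γ := by
      simp_rw [← mul_assoc, ← real_inner_smul_left, lintegral_exp_inner_stdGaussian]
    _ ≤ ∫⁻ _, ENNReal.ofReal (Real.exp ((Real.pi / 2 * K) ^ 2 * l ^ 2 / 2)) ∂γ := by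
      gcongr with x
      exact hnorm x
    _ = _ := by simp

theorem hasSubgaussianMGF_sub_integral_stdGaussian (hf : LipschitzWith K f) :
    HasSubgaussianMGF (fun x => f x - ∫ y, f y ∂γ) ((NNReal.pi / 2 * K) ^ 2) γ := by
  have : Measurable f := hf.continuous.measurable
  have hnonneg (l : ℝ) : ∀ᵐ x ∂γ, 0 ≤ Real.exp (l * (f x - ∫ y, f y ∂γ)) :=
    .of_forall fun x => (Real.exp_pos _).le
  refine ⟨fun l => ⟨by fun_prop, ?_⟩, fun l => ?_⟩
  · rw [hasFiniteIntegral_iff_ofReal (hnonneg l)]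
    exact (lintegral_exp_mul_sub_integral_le hf l).trans_lt ENNReal.ofReal_lt_top
  · rw [mgf, integral_eq_lintegral_of_nonneg_ae (hnonneg l) (by fun_prop)]
    exact ENNReal.toReal_le_of_le_ofReal (Real.exp_pos _).le
      (by simpa using lintegral_exp_mul_sub_integral_le hf l)

theorem measureReal_le_abs_sub_integral_stdGaussian_le (hf : LipschitzWith K f) {t : ℝ}
    (ht : 0 ≤ t) :
    Measure.real γ {x | t ≤ |f x - ∫ y, f y ∂γ|} ≤
      2 * Real.exp (-t ^ 2 / (2 * (Real.pi / 2 * K) ^ 2)) := by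
  have hsub := hasSubgaussianMGF_sub_integral_stdGaussian hf
  have hupper := hsub.measure_ge_le ht
  have hlower := hsub.neg.measure_ge_le ht
  have hunion : {x | t ≤ |f x - ∫ y, f y ∂γ|} =
      {x | t ≤ f x - ∫ y, f y ∂γ} ∪ {x | t ≤ -(f x - ∫ y, f y ∂γ)} := by
    ext x
    simp only [Set.mem_ofPred_eq, Set.mem_union]
    exact le_abs
  rw [hunion]
  refine (measureReal_union_le _ _).trans ((add_le_add hupper hlower).trans_eq ?_)
  simp [two_mul]

theorem variance_stdGaussian_le_integral_norm_gradient_sq (hf : LipschitzWith K f) :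
    Var[f; γ] ≤ (Real.pi / 2) ^ 2 * ∫ x, ‖∇ f x‖ ^ 2 ∂γ := by
  have hint : Integrable (fun x => ‖∇ f x‖ ^ 2) γ :=
    .of_bound ((measurable_gradient f).norm.pow_const 2).aestronglyMeasurable ((K : ℝ) ^ 2) <|
      .of_forall fun x => by
        simpa using pow_le_pow_left₀ (norm_nonneg _) (norm_gradient_le_of_lipschitz hf x) 2
  have hlint : evariance f γ ≤ ENNReal.ofReal ((Real.pi / 2) ^ 2 * ∫ x, ‖∇ f x‖ ^ 2 ∂γ) := by
    rw [evariance_eq_lintegral_ofReal]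
    refine (lintegral_comp_sub_integral_le hf even_two.convexOn_pow sq_nonneg).trans_eq ?_
    simp_rw [← real_inner_smul_left, lintegral_inner_sq_stdGaussian, norm_smul, mul_pow,
      Real.norm_eq_abs, sq_abs]
    rw [← ofReal_integral_eq_lintegral_ofReal (hint.const_mul _)
      (.of_forall fun x => by positivity), integral_const_mul]
  exact ENNReal.toReal_le_of_le_ofReal (by positivity) hlint

theorem variance_stdGaussian_le_of_gradient_eq_zero (hf : LipschitzWith K f) {S : Set E}
    (hS : MeasurableSet S) (hgrad : ∀ x ∉ S, ∇ f x = 0) :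
    Var[f; γ] ≤ (Real.pi / 2 * K) ^ 2 * Measure.real γ S := by
  have hle (x : E) : ‖∇ f x‖ ^ 2 ≤ S.indicator (fun _ => (K : ℝ) ^ 2) x := by
    by_cases hx : x ∈ S
    · simpa [hx] using pow_le_pow_left₀ (norm_nonneg _) (norm_gradient_le_of_lipschitz hf x) 2
    · simp [hx, hgrad x hx]
  calc Var[f; γ] ≤ (Real.pi / 2) ^ 2 * ∫ x, ‖∇ f x‖ ^ 2 ∂γ :=
        variance_stdGaussian_le_integral_norm_gradient_sq hf
    _ ≤ (Real.pi / 2) ^ 2 * ∫ x, S.indicator (fun _ => (K : ℝ) ^ 2) x ∂γ := by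
        gcongr ?_ * ?_
        exact integral_mono_of_nonneg (.of_forall fun x => by positivity)
          ((integrable_const _).indicator hS) (.of_forall hle)
    _ = (Real.pi / 2 * K) ^ 2 * Measure.real γ S := by
        rw [integral_indicator_const _ hS, smul_eq_mul]
        ring

theorem pow_four_div_le_measureReal_abs_sub_integral_lt (hf : LipschitzWith K f) {t : ℝ}
    (ht : 0 < t) :
    t ^ 4 / (((Real.pi / 2 * K) ^ 2) ^ 2 + 2 * t ^ 4) ≤
      Measure.real γ {x | |f x - ∫ y, f y ∂γ| < t} := by
  set M := ∫ y, f y ∂γ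
  set S := {x | |f x - M| < t}
  set a := (Real.pi / 2 * K) ^ 2
  set p := Measure.real γ S
  set g : E → ℝ := fun x => truncate t (f x - M)
  have hS : MeasurableSet S :=
    measurableSet_lt (hf.continuous.sub continuous_const).abs.measurable measurable_const
  have hfM : LipschitzWith K fun x => f x - M := by
    simpa using hf.sub (LipschitzWith.const M)
  have hg : LipschitzWith K g := lipschitzWith_truncate_comp hfM t
  have hf2 : MemLp f 2 γ := memLp_stdGaussian_of_lipschitz hf ENNReal.ofNat_ne_top
  have hg2 : MemLp g 2 γ := memLp_stdGaussian_of_lipschitz hg ENNReal.ofNat_ne_top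
  have hvarf : Var[f; γ] ≤ a := by
    simpa using variance_stdGaussian_le_of_gradient_eq_zero hf MeasurableSet.univ (by simp)
  have hvarg : Var[g; γ] ≤ a * p :=
    variance_stdGaussian_le_of_gradient_eq_zero hg hS fun x hx =>
      gradient_truncate_comp_eq_zero ht.le (not_lt.1 hx)
  have hcov : t ^ 2 * (1 - p) ≤ cov[f, g; γ] := by
    have hcompl : Sᶜ = {x | t ≤ |f x - M|} := by
      ext x
      simp [S]
    rw [← probReal_compl_eq_one_sub hS, hcompl]
    exact mul_measureReal_le_covariance_truncate hf2 ht.le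
  have hp1 : p ≤ 1 := measureReal_le_one
  have hCS : (t ^ 2 * (1 - p)) ^ 2 ≤ a * (a * p) :=
    calc (t ^ 2 * (1 - p)) ^ 2 ≤ cov[f, g; γ] ^ 2 :=
          pow_le_pow_left₀ (mul_nonneg (sq_nonneg t) (sub_nonneg.2 hp1)) hcov 2
      _ ≤ Var[f; γ] * Var[g; γ] := covariance_sq_le_variance_mul_variance hf2 hg2
      _ ≤ a * (a * p) := mul_le_mul hvarf hvarg (variance_nonneg _ _) (sq_nonneg _)
  -- `hCS` reads `t⁴ (1 - p)² ≤ a² p`, and `(1 - p)² ≥ 1 - 2p`.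
  rw [div_le_iff₀ (by positivity)]
  nlinarith [pow_pos ht 4, mul_nonneg (pow_pos ht 4).le (sq_nonneg p)]

end MaureyPisier

theorem exists_forall_one_sub_exp_lt_measureReal_abs_sub_integral_lt {A : ℝ≥0} (hA : 0 < A)
    {t : ℝ} (ht : 0 < t) :
    ∃ c > 0, ∀ (E : Type*) [NormedAddCommGroup E] [InnerProductSpace ℝ E] [FiniteDimensional ℝ E]
      [MeasurableSpace E] [BorelSpace E] (f : E → ℝ) (n : ℕ), 1 ≤ n →
      LipschitzWith (NNReal.sqrt (A / n)) f →
      1 - Real.exp (-c * n) < (stdGaussian E).real {x | |f x - ∫ y, f y ∂stdGaussian E| < t} := by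
  set b := t ^ 2 / (2 * ((Real.pi / 2) ^ 2 * A))
  set q := t ^ 4 / (((Real.pi / 2) ^ 2 * A) ^ 2 + 2 * t ^ 4)
  obtain ⟨c, hc, hmin⟩ :=
    exists_forall_min_two_mul_exp_lt_exp (b := b) (q := q) (by positivity) (by positivity)
  refine ⟨c, hc, fun E _ _ _ _ _ f n hn hf => ?_⟩
  set μ := stdGaussian E
  set S := {x | |f x - ∫ y, f y ∂μ| < t}
  have hn0 : (0 : ℝ) < n := Nat.cast_pos.2 hn
  have hK : (Real.pi / 2 * (NNReal.sqrt (A / n) : ℝ)) ^ 2 = (Real.pi / 2) ^ 2 * A / n := by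
    rw [mul_pow, ← NNReal.coe_pow, NNReal.sq_sqrt, NNReal.coe_div, NNReal.coe_natCast,
      mul_div_assoc]
  have hS : MeasurableSet S :=
    measurableSet_lt (hf.continuous.sub continuous_const).abs.measurable measurable_const
  have hcompl : 1 - μ.real S ≤ 2 * Real.exp (-b * n) := by
    rw [← probReal_compl_eq_one_sub hS]
    convert measureReal_le_abs_sub_integral_stdGaussian_le hf ht.le using 3
    · ext x
      simp [S, μ]
    · rw [hK]
      simp only [b]
      field_simp
  have hmass : q ≤ μ.real S := by
    refine le_trans ?_ (pow_four_div_le_measureReal_abs_sub_integral_lt hf ht)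
    rw [hK]
    simp only [q]
    gcongr
    exact div_le_self (by positivity) (Nat.one_le_cast.2 hn)
  have hlt := hmin n hn0.le
  linarith [le_min hcompl (sub_le_sub_left hmass 1)]

/-! ### The TAP free energy as a function of the couplings -/

theorem lipschitzWith_log_integral_exp_inner {E α : Type*} [NormedAddCommGroup E]
    [InnerProductSpace ℝ E] {mα : MeasurableSpace α} {ν : Measure α} [IsFiniteMeasure ν] [NeZero ν]
    {a : α → E} {L : ℝ≥0} (ha : AEStronglyMeasurable a ν) (haL : ∀ᵐ s ∂ν, ‖a s‖ ≤ L) :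
    LipschitzWith L fun x => Real.log (∫ s, Real.exp ⟪a s, x⟫ ∂ν) := by
  have hbound (x : E) : ∀ᵐ s ∂ν, ⟪a s, x⟫ ≤ L * ‖x‖ := by
    filter_upwards [haL] with s hs
    exact (real_inner_le_norm _ _).trans (mul_le_mul_of_nonneg_right hs (norm_nonneg x))
  have hint (x : E) : Integrable (fun s => Real.exp ⟪a s, x⟫) ν := by
    refine .of_bound (Real.continuous_exp.comp_aestronglyMeasurable
      (ha.inner aestronglyMeasurable_const)) (Real.exp (L * ‖x‖)) ?_
    filter_upwards [hbound x] with s hs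
    simpa using hs
  refine LipschitzWith.of_le_add_mul L fun x y => ?_
  have hle : ∫ s, Real.exp ⟪a s, x⟫ ∂ν ≤
      Real.exp (L * dist x y) * ∫ s, Real.exp ⟪a s, y⟫ ∂ν := by
    rw [← integral_const_mul]
    refine integral_mono_ae (hint x) ((hint y).const_mul _) ?_
    filter_upwards [hbound (x - y)] with s hs
    rw [inner_sub_right, ← dist_eq_norm, sub_le_iff_le_add] at hs
    simpa [← Real.exp_add] using hs
  calc
    _ ≤ Real.log (Real.exp (L * dist x y) * ∫ s, Real.exp ⟪a s, y⟫ ∂ν) :=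
      Real.log_le_log (integral_exp_pos (hint x)) hle
    _ = _ := by
      rw [Real.log_mul (Real.exp_ne_zero _) (integral_exp_pos (hint y)).ne', Real.log_exp, add_comm]

section Hamiltonian

variable {N P : ℕ} {c : ℕ → ℝ}

/-- The coefficients of the Gaussian couplings in `H_N(σ)`, so that the Hamiltonian is the linear
functional `⟪hamiltonianCoeff N P c σ, ·⟫` of the flattened couplings. -/
def hamiltonianCoeff (N P : ℕ) (c : ℕ → ℝ) (σ : Fin N → ℝ) : EuclideanSpace ℝ (GIdx N P) :=
  WithLp.toLp 2 fun i => c i.1 * (N : ℝ) ^ (-((((i.1 : ℕ) : ℝ) - 1) / 2)) * ∏ l, σ (i.2 l)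

theorem measurable_hamiltonianCoeff : Measurable (hamiltonianCoeff N P c) := by
  unfold hamiltonianCoeff
  fun_prop

theorem hamiltonian_eq_inner (g : (k : ℕ) → (Fin k → Fin N) → ℝ) (σ : Fin N → ℝ) :
    hamiltonian N P c g σ = ⟪hamiltonianCoeff N P c σ, WithLp.toLp 2 (flatten N P g)⟫ := by
  simp only [hamiltonian, hamiltonianCoeff, EuclideanSpace.inner_toLp_toLp, dotProduct, flatten,
    Fintype.sum_sigma, Finset.mul_sum, star_trivial]
  rw [← Finset.sum_coe_sort]
  exact Finset.sum_congr rfl fun n _ => Finset.sum_congr rfl fun j _ => by ring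

theorem sum_prod_sq (n : ℕ) (σ : Fin N → ℝ) :
    ∑ j : Fin n → Fin N, (∏ l, σ (j l)) ^ 2 = (∑ i, σ i ^ 2) ^ n := by
  rw [Finset.sum_pow', Fintype.piFinset_univ]
  simp only [Finset.prod_pow]

theorem norm_hamiltonianCoeff_sq (hN : N ≠ 0) (σ : Fin N → ℝ) :
    ‖hamiltonianCoeff N P c σ‖ ^ 2 = N * xiFun P c ((∑ i, σ i ^ 2) / N) := by
  have hN0 : (0 : ℝ) < N := by positivity
  have hpow (n : ℕ) : ((N : ℝ) ^ (-(((n : ℝ) - 1) / 2))) ^ 2 = N / N ^ n := by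
    have hexp : -(((n : ℝ) - 1) / 2) * (2 : ℕ) = 1 - n := by
      push_cast
      ring
    rw [← Real.rpow_mul_natCast hN0.le, hexp, Real.rpow_sub hN0, Real.rpow_one, Real.rpow_natCast]
  simp only [EuclideanSpace.norm_sq_eq, hamiltonianCoeff, Fintype.sum_sigma, Real.norm_eq_abs,
    sq_abs, mul_pow, hpow, ← Finset.mul_sum, sum_prod_sq, xiFun, div_pow]
  rw [Finset.mul_sum, ← Finset.sum_coe_sort (Finset.Icc 2 P)]
  exact Finset.sum_congr rfl fun n _ => by ring

theorem norm_hamiltonianCoeff_le (hN : N ≠ 0) {σ : Fin N → ℝ} (hσ : ∑ i, σ i ^ 2 ≤ (N : ℝ)) :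
    ‖hamiltonianCoeff N P c σ‖ ≤ √(N * xiFun P c 1) := by
  have hN0 : (0 : ℝ) < N := by positivity
  refine Real.le_sqrt_of_sq_le ?_
  rw [norm_hamiltonianCoeff_sq hN]
  unfold xiFun
  gcongr
  exact (div_le_one hN0).2 hσ

theorem xiFun_pos (hc : ∃ k ∈ Finset.Icc 2 P, c k ≠ 0) {x : ℝ} (hx : 0 < x) : 0 < xiFun P c x := by
  obtain ⟨k, hk, hck⟩ := hc
  exact Finset.sum_pos' (fun n _ => by positivity) ⟨k, hk, by positivity⟩

theorem isProbabilityMeasure_sphereUniform (N : ℕ) : IsProbabilityMeasure (sphereUniform N) :=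
  Measure.isProbabilityMeasure_map (by fun_prop : Measurable _).aemeasurable

theorem measurableSet_sphereSet (N : ℕ) : MeasurableSet (sphereSet N) :=
  measurableSet_eq_fun (by fun_prop) (by fun_prop)

theorem measurableSet_band (N : ℕ) (m : Fin N → ℝ) (δ : ℝ) : MeasurableSet (band N m δ) := by
  have hoverlap : MeasurableSet {σ | |dotp (σ - m) m| < N * δ} := by
    unfold dotp
    exact measurableSet_lt (by fun_prop) (by fun_prop)
  exact (measurableSet_sphereSet N).inter hoverlap

theorem measurableSet_bandK (N k : ℕ) (m : Fin N → ℝ) (δ ε : ℝ) :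
    MeasurableSet (bandK N k m δ ε) := by
  have hband (i : Fin k) : MeasurableSet {σs : Fin k → Fin N → ℝ | σs i ∈ band N m δ} :=
    measurable_pi_apply i (measurableSet_band N m δ)
  have hoverlap (i j : Fin k) :
      MeasurableSet {σs : Fin k → Fin N → ℝ | |dotp (σs i) (σs j) - dotp m m| < N * ε} := by
    unfold dotp
    exact measurableSet_lt (by fun_prop) (by fun_prop)
  simp only [bandK, Set.ofPred_and, Set.ofPred_forall]
  exact (MeasurableSet.iInter hband).inter <| .iInter fun i => .iInter fun j =>
    .iInter fun _ => hoverlap i j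

/-- The coefficients of the Gaussian couplings in the exponent
`β ∑ᵢ (H_N(σⁱ) - H_N(m))` of the replicated partition function. -/
def tapCoeff (N P : ℕ) (c : ℕ → ℝ) {k : ℕ} (β : ℝ) (m : Fin N → ℝ) (σs : Fin k → Fin N → ℝ) :
    EuclideanSpace ℝ (GIdx N P) :=
  β • ∑ i, (hamiltonianCoeff N P c (σs i) - hamiltonianCoeff N P c m)

theorem measurable_tapCoeff {k : ℕ} (β : ℝ) (m : Fin N → ℝ) :
    Measurable (tapCoeff N P c (k := k) β m) := by
  have := measurable_hamiltonianCoeff (N := N) (P := P) (c := c)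
  unfold tapCoeff
  fun_prop

theorem norm_tapCoeff_le (hN : N ≠ 0) {k : ℕ} (β : ℝ) {m : Fin N → ℝ}
    (hm : ∑ i, m i ^ 2 ≤ (N : ℝ)) {σs : Fin k → Fin N → ℝ}
    (hσs : ∀ i, ∑ l, σs i l ^ 2 ≤ (N : ℝ)) :
    ‖tapCoeff N P c β m σs‖ ≤ k * N * √(4 * β ^ 2 * xiFun P c 1 / N) := by
  have : (0 : ℝ) < N := by positivity
  have hsqrt : N * √(4 * β ^ 2 * xiFun P c 1 / N) = 2 * |β| * √(N * xiFun P c 1) := by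
    have hscale : 4 * β ^ 2 * xiFun P c 1 / N = (2 * |β| / N) ^ 2 * (N * xiFun P c 1) := by
      rw [div_pow, mul_pow, sq_abs]
      field_simp
      ring
    rw [hscale, Real.sqrt_mul (sq_nonneg _), Real.sqrt_sq (by positivity)]
    field_simp
  calc
    _ = |β| * ‖∑ i, (hamiltonianCoeff N P c (σs i) - hamiltonianCoeff N P c m)‖ := by
      rw [tapCoeff, norm_smul, Real.norm_eq_abs]
    _ ≤ |β| * ∑ _i : Fin k, (√(N * xiFun P c 1) + √(N * xiFun P c 1)) := by
      gcongr
      refine norm_sum_le_of_le _ fun i _ => (norm_sub_le _ _).trans ?_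
      exact add_le_add (norm_hamiltonianCoeff_le hN (hσs i)) (norm_hamiltonianCoeff_le hN hm)
    _ = k * N * √(4 * β ^ 2 * xiFun P c 1 / N) := by
      rw [mul_assoc, hsqrt, Finset.sum_const, Finset.card_univ, Fintype.card_fin, nsmul_eq_mul]
      ring

/-- The replicated TAP free energy as a function on the Euclidean space of all couplings. -/
def tapFreeEnergy (N P : ℕ) (c : ℕ → ℝ) (k : ℕ) (β δ ε : ℝ) (m : Fin N → ℝ)
    (x : EuclideanSpace ℝ (GIdx N P)) : ℝ :=
  (k * N : ℝ)⁻¹ * Real.log (∫ σs in bandK N k m δ ε, Real.exp ⟪tapCoeff N P c β m σs, x⟫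
    ∂Measure.pi fun _ : Fin k => sphereUniform N)

theorem TAPk_eq_tapFreeEnergy (k : ℕ) (β δ ε : ℝ) (g : (j : ℕ) → (Fin j → Fin N) → ℝ)
    (m : Fin N → ℝ) :
    TAPk N P c k β δ ε g m =
      tapFreeEnergy N P c k β δ ε m (WithLp.toLp 2 (flatten N P g)) := by
  simp only [TAPk, tapFreeEnergy, tapCoeff, hamiltonian_eq_inner, real_inner_smul_left, sum_inner,
    inner_sub_left, div_eq_inv_mul]

theorem lipschitzWith_tapFreeEnergy (hN : N ≠ 0) {k : ℕ} (hk : k ≠ 0) (β δ ε : ℝ)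
    {m : Fin N → ℝ} (hm : ∑ i, m i ^ 2 ≤ (N : ℝ))
    (hpos : 0 < (Measure.pi fun _ : Fin k => sphereUniform N) (bandK N k m δ ε)) :
    LipschitzWith (NNReal.sqrt ((4 * β ^ 2 * xiFun P c 1).toNNReal / N))
      (tapFreeEnergy N P c k β δ ε m) := by
  have := isProbabilityMeasure_sphereUniform N
  set ν := (Measure.pi fun _ : Fin k => sphereUniform N).restrict (bandK N k m δ ε)
  have : NeZero ν := ⟨by rw [Ne, Measure.restrict_eq_zero]; exact hpos.ne'⟩
  set K := NNReal.sqrt ((4 * β ^ 2 * xiFun P c 1).toNNReal / N)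
  have hK : √(4 * β ^ 2 * xiFun P c 1 / N) = K := by
    rw [Real.sqrt, Real.toNNReal_div' N.cast_nonneg, Real.toNNReal_natCast]
  have hbound : ∀ᵐ σs ∂ν, ‖tapCoeff N P c β m σs‖ ≤ (k * N * K : ℝ≥0) := by
    refine ae_restrict_of_forall_mem (measurableSet_bandK N k m δ ε) fun σs hσs => ?_
    exact_mod_cast hK ▸ norm_tapCoeff_le hN β hm fun i => (hσs.1 i).1.le
  have hlog := lipschitzWith_log_integral_exp_inner
    (measurable_tapCoeff β m).aestronglyMeasurable hbound
  refine ((lipschitzWith_smul (k * N : ℝ)⁻¹).comp hlog).weaken (le_of_eq ?_)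
  simp [field]

theorem StdGaussianCouplings.hasLaw_toLp_flatten {Ω : Type*} [MeasureSpace Ω]
    {G : Ω → (k : ℕ) → (Fin k → Fin N) → ℝ} (hG : StdGaussianCouplings N P G) :
    HasLaw (fun ω => WithLp.toLp 2 (flatten N P (G ω)))
      (stdGaussian (EuclideanSpace ℝ (GIdx N P))) ℙ := by
  have hflat : HasLaw (fun ω => flatten N P (G ω)) (Measure.pi fun _ => gaussianReal 0 1) ℙ :=
    ⟨aemeasurable_of_map_neZero (by rw [hG]; infer_instance), hG⟩
  exact HasLaw.fun_comp ⟨by fun_prop, map_pi_eq_stdGaussian⟩ hflat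

end Hamiltonian

/-- uniform exponential concentration of the replicated TAP free energy. -/
theorem statement_19 {Ω : Type*} [MeasureSpace Ω] [IsProbabilityMeasure (ℙ : Measure Ω)]
    (P : ℕ) (hP : 2 ≤ P) (c : ℕ → ℝ) (hc : ∃ k ∈ Finset.Icc 2 P, c k ≠ 0)
    (G : (N : ℕ) → Ω → (k : ℕ) → (Fin k → Fin N) → ℝ)
    (hG : ∀ N, 1 ≤ N → StdGaussianCouplings N P (G N))
    (β : ℝ) (hβ : 0 < β) (δ ε t : ℝ) (hδ : 0 < δ) (hε : 0 < ε) (ht : 0 < t)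
    (k : ℕ) (hk : 1 ≤ k) :
    ∃ cc > (0 : ℝ), ∀ N : ℕ, 1 ≤ N → ∀ m : Fin N → ℝ, ∑ i, (m i) ^ 2 ≤ (N : ℝ) →
      0 < (Measure.pi fun _ : Fin k => sphereUniform N) (bandK N k m δ ε) →
      1 - Real.exp (-cc * N) <
        (ℙ {ω | |TAPk N P c k β δ ε (G N ω) m
          - ∫ ω', TAPk N P c k β δ ε (G N ω') m ∂ℙ| < t}).toReal := by
  have hA : 0 < (4 * β ^ 2 * xiFun P c 1).toNNReal :=
    Real.toNNReal_pos.2 (mul_pos (by positivity) (xiFun_pos hc one_pos))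
  obtain ⟨cc, hcc, hconc⟩ :=
    exists_forall_one_sub_exp_lt_measureReal_abs_sub_integral_lt hA ht
  refine ⟨cc, hcc, fun N hN m hm hpos => ?_⟩
  have hlip := lipschitzWith_tapFreeEnergy (P := P) (c := c) (Nat.one_le_iff_ne_zero.1 hN)
    (Nat.one_le_iff_ne_zero.1 hk) β δ ε hm hpos
  have hlaw := (hG N hN).hasLaw_toLp_flatten
  simp only [TAPk_eq_tapFreeEnergy]
  set F := tapFreeEnergy N P c k β δ ε m
  have hmean := hlaw.integral_comp (f := F) hlip.continuous.aestronglyMeasurable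
  rw [Function.comp_def] at hmean
  rw [hmean, ← measureReal_def, hlaw.measureReal_eq (p := fun x => |F x - _| < t)
    (measurableSet_lt (hlip.continuous.sub continuous_const).abs.measurable measurable_const)]
  exact hconc _ F N hN hlip
end
end
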